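/- Let H_1, …, H_q be q ≥ 2N+1 hyperplanes in general position in ℙᴺ(ℂ) and let m_1, …, m_q be positive integers or ∞ with Σ_{j=1}^q (1 − N/m_j) > N+1. Then there is no nonconstant holomorphic map f : ℂ → ℙᴺ(ℂ) that intersects each H_j with multiplicity at least m_j (i.e., every zero of the pullback of the defining linear form of H_j under an admissible representation of f has order ≥ m_j, with m_j = ∞ meaning f(ℂ) ⊂ H_j or f(ℂ) ∩ H_j = ∅). -/

import Mathlib

/-!
Restrict the linear forms to the linear span of the curve. The curve becomes `F : ℂ → ℂᵈ` with
linearly independent components, and the forms that survive are in `n`-subgeneral position: any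
`n + 1` of them span the dual space. Nochka weights `ω j ≤ θ` reduce weighted sums over all forms
to sums over bases, for which Cartan's argument applies. The Wronskian `W` of `F` vanishes wherever
some form `g j` has a zero of order at least `d`, so if every zero of `g j` has order at least
`m j`, then the orders of `W` dominate `∑ j, τ j * ord (g j)` with
`τ j = ω j * (1 - (d - 1) / m j)`. On circles the logarithmic derivative lemma bounds the quotient
of `W` by a product of `d` independent forms, and Jensen's formula turns this into
`(∑ j, τ j - d) * T r ≤ O(log (T r))` along a sequence of radii supplied by Borel's growth lemma,
where `T` is the characteristic function of the curve. As `T` is unbounded, `∑ j, τ j ≤ d`; because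
`∑ j, ω j = θ * (q - 2 * n + d - 2) + d`, this bounds `∑ j, (1 - N / m j)` by `N + 1` unless
`d ≤ 1`, that is, unless the curve is constant.
-/

/-! ### Nochka weights -/

section NochkaWeights

variable {ι : Type*} {r : Finset ι → ℕ} {d n : ℕ} {S T : Finset ι}
  {ω : ι → ℝ} {θ σ : ℝ}

theorem sub_card_pos_of_ssubset (h : S ⊂ T) : (0 : ℝ) < T.card - S.card :=
  sub_pos.2 (Nat.cast_lt.2 (Finset.card_lt_card h))

theorem exists_min_slope [Finite ι] (hST : S ⊂ T) (hT : r T < d) :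
    ∃ T', S ⊂ T' ∧ r T' < d ∧ ∃ σ : ℝ, σ * (T'.card - S.card) = r T' - r S ∧
      ∀ A, S ⊂ A → r A < d → σ * (A.card - S.card) ≤ r A - r S := by
  classical
  have := Fintype.ofFinite ι
  obtain ⟨T', hT', h_min⟩ := Finset.exists_min_image
    (Finset.univ.filter fun A => S ⊂ A ∧ r A < d)
    (fun A => ((r A : ℝ) - r S) / ((A.card : ℝ) - S.card)) ⟨T, by simp [hST, hT]⟩
  obtain ⟨hST', hT'd⟩ : S ⊂ T' ∧ r T' < d := by simpa using hT'
  refine ⟨T', hST', hT'd, _, div_mul_cancel₀ _ (sub_card_pos_of_ssubset hST').ne', ?_⟩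
  intro A hSA hA
  exact (le_div_iff₀ (sub_card_pos_of_ssubset hSA)).1 (h_min A (by simp [hSA, hA]))

variable [DecidableEq ι]

/-- Matroid rank functions: the combinatorial properties of the dimension of the span of a finite
family of vectors on which the construction of Nochka weights rests. -/
structure IsRankFunction (r : Finset ι → ℕ) : Prop where
  mono : Monotone r
  submodular : ∀ A B, r (A ∪ B) + r (A ∩ B) ≤ r A + r B
  le_card : ∀ A, r A ≤ A.card

/-- The rank functions of families in `n`-subgeneral position in a space of dimension `d`: any
`n + 1` members of the family span. -/
structure IsSubgeneralRank (r : Finset ι → ℕ) (d n : ℕ) : Prop extends IsRankFunction r where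
  eq_of_lt_card : ∀ A, n < A.card → r A = d

/-- `ω` is a system of Nochka weights with Nochka constant `θ` for the rank function `r`. -/
structure IsNochkaWeight [Fintype ι] (r : Finset ι → ℕ) (d n : ℕ) (ω : ι → ℝ) (θ : ℝ) :
    Prop where
  const_pos : 0 < θ
  nonneg : ∀ j, 0 ≤ ω j
  le_const : ∀ j, ω j ≤ θ
  sum_eq : ∑ j, ω j = θ * (Fintype.card ι - 2 * n + d - 2) + d
  sum_le_rank : ∀ A : Finset ι, A.card ≤ n + 1 → ∑ j ∈ A, ω j ≤ r A

/-- `ω` is a stage of the construction of Nochka weights, in which the weights on `S` are already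
chosen. In the plane of the points `(|A|, r A)`, each weight chosen so far is at most the slope
from `(|S|, r S)` to the point of any larger non-spanning set and to `(2n - d + 2, d)`; hence the
slopes chosen at later stages increase. -/
structure IsPartialNochkaWeight (r : Finset ι → ℕ) (d n : ℕ) (S : Finset ι) (ω : ι → ℝ) :
    Prop where
  rank_lt : r S < d
  nonneg : ∀ j, 0 ≤ ω j
  sum_eq : ∑ j ∈ S, ω j = r S
  sum_le_rank : ∀ A ⊆ S, ∑ j ∈ A, ω j ≤ r A
  mul_card_sub_le : ∀ T, S ⊂ T → r T < d → ∀ j ∈ S, ω j * (T.card - S.card) ≤ (r T : ℝ) - r S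
  mul_sub_card_le : ∀ j ∈ S, ω j * (2 * n - d + 2 - S.card) ≤ (d : ℝ) - r S

theorem IsRankFunction.empty (hr : IsRankFunction r) : r ∅ = 0 := by
  simpa using hr.le_card ∅

theorem IsSubgeneralRank.card_add_le [Fintype ι] (hr : IsSubgeneralRank r d n)
    (hn : n + 1 ≤ Fintype.card ι) (hS : S.card ≤ n + 1) : S.card + d ≤ n + 1 + r S := by
  obtain ⟨T, hST, hT⟩ := Finset.exists_superset_card_eq hS hn
  have h_full := hr.eq_of_lt_card T (by omega)
  have h_sub := hr.submodular S (T \ S)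
  have h_le := hr.le_card (T \ S)
  have h_card := Finset.card_sdiff_add_card_eq_card hST
  rw [Finset.union_sdiff_of_subset hST] at h_sub
  omega

theorem IsSubgeneralRank.card_add_le_of_lt [Fintype ι] (hr : IsSubgeneralRank r d n)
    (hn : n + 1 ≤ Fintype.card ι) (hS : r S < d) : (S.card + d : ℝ) ≤ n + 1 + r S := by
  have hSn : S.card ≤ n := not_lt.1 fun h => hS.ne (hr.eq_of_lt_card S h)
  exact_mod_cast hr.card_add_le hn (hSn.trans n.le_succ)

theorem IsSubgeneralRank.dim_le [Fintype ι] (hr : IsSubgeneralRank r d n)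
    (hn : n + 1 ≤ Fintype.card ι) : (d : ℝ) ≤ n + 1 := by
  have h := hr.card_add_le hn (S := ∅) (by simp)
  rw [hr.empty] at h
  exact_mod_cast (by simpa using h : d ≤ n + 1)

theorem IsRankFunction.sum_piecewise_le_rank (hr : IsRankFunction r)
    (hω : ∀ A ⊆ S, ∑ j ∈ A, ω j ≤ r A) {A : Finset ι}
    (hσ : σ * ((A ∪ S).card - S.card) ≤ (r (A ∪ S) : ℝ) - r S) :
    ∑ j ∈ A, S.piecewise ω (fun _ => σ) j ≤ r A := by
  have h_inter := hω (A ∩ S) Finset.inter_subset_right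
  have h_sub : (r (A ∪ S) + r (A ∩ S) : ℝ) ≤ r A + r S := by exact_mod_cast hr.submodular A S
  rw [Finset.sum_piecewise, Finset.sum_const, nsmul_eq_mul, ← Finset.union_sdiff_right,
    Finset.cast_card_sdiff Finset.subset_union_right]
  linarith

theorem IsPartialNochkaWeight.empty (hr : IsRankFunction r) (hd : 0 < d) :
    IsPartialNochkaWeight r d n ∅ 0 where
  rank_lt := by rwa [hr.empty]
  nonneg := by simp
  sum_eq := by simp [hr.empty]
  sum_le_rank := by simp
  mul_card_sub_le := by simp
  mul_sub_card_le := by simp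

theorem IsPartialNochkaWeight.piecewise [Fintype ι] (hω : IsPartialNochkaWeight r d n S ω)
    (hr : IsSubgeneralRank r d n) (hn : n + 1 ≤ Fintype.card ι) (hST : S ⊂ T) (hT : r T < d)
    (hσ : σ * (T.card - S.card) = r T - r S)
    (h_min : ∀ A, S ⊂ A → r A < d → σ * (A.card - S.card) ≤ r A - r S)
    (hσd : σ * (2 * n - d + 2 - S.card) ≤ d - r S) :
    IsPartialNochkaWeight r d n T (S.piecewise ω fun _ => σ) := by
  have h_pos := sub_card_pos_of_ssubset hST
  have h_mono : (r S : ℝ) ≤ r T := Nat.cast_le.2 (hr.mono hST.1)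
  have hσ0 : 0 ≤ σ := nonneg_of_mul_nonneg_left (by linarith) h_pos
  have h_le : ∀ j, S.piecewise ω (fun _ => σ) j ≤ σ := by
    intro j
    by_cases hj : j ∈ S
    · rw [Finset.piecewise_eq_of_mem _ _ _ hj]
      exact le_of_mul_le_mul_right (hσ ▸ hω.mul_card_sub_le T hST hT j hj) h_pos
    · rw [Finset.piecewise_eq_of_notMem _ _ _ hj]
  refine ⟨hT, ?_, ?_, ?_, ?_, ?_⟩
  · intro j
    by_cases hj : j ∈ S <;> simp [hj, hσ0, hω.nonneg]
  · rw [Finset.sum_piecewise, Finset.inter_eq_right.2 hST.1, hω.sum_eq, Finset.sum_const,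
      nsmul_eq_mul, Finset.cast_card_sdiff hST.1]
    linarith
  · intro A hA
    refine hr.sum_piecewise_le_rank hω.sum_le_rank ?_
    rcases (Finset.subset_union_right : S ⊆ A ∪ S).eq_or_ssubset with h_eq | h_ss
    · simp [← h_eq]
    · exact h_min _ h_ss ((hr.mono (Finset.union_subset hA hST.1)).trans_lt hT)
  · intro A hTA hA j _
    have h_slope := h_min A (hST.trans hTA) hA
    have h_mul := mul_le_mul_of_nonneg_right (h_le j) (sub_card_pos_of_ssubset hTA).le
    linarith
  · intro j _
    have h_card := hr.card_add_le_of_lt hn hT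
    have h_rank : (r T : ℝ) + 1 ≤ d := by exact_mod_cast hT
    have h_mul := mul_le_mul_of_nonneg_right (h_le j)
      (by linarith [hr.dim_le hn] : (0 : ℝ) ≤ 2 * n - d + 2 - T.card)
    linarith

theorem IsPartialNochkaWeight.sum_piecewise_le_rank_of_le [Fintype ι]
    (hω : IsPartialNochkaWeight r d n S ω) (hr : IsSubgeneralRank r d n)
    (hn : n + 1 ≤ Fintype.card ι) {A : Finset ι} (hA : A.card ≤ n + 1) (h_full : d ≤ r (A ∪ S))
    (hθ0 : 0 ≤ θ) (hθ1 : θ ≤ 1) (hθ : θ * (n + 1 - r S) ≤ d - r S) :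
    ∑ j ∈ A, S.piecewise ω (fun _ => θ) j ≤ r A := by
  have h_inter := hω.sum_le_rank (A ∩ S) Finset.inter_subset_right
  have h_sub : (d : ℝ) + r (A ∩ S) ≤ r A + r S := by
    exact_mod_cast (Nat.add_le_add_right h_full _).trans (hr.submodular A S)
  have h_card : (A.card + d : ℝ) ≤ n + 1 + r A := by exact_mod_cast hr.card_add_le hn hA
  have h_le_card : (r (A ∩ S) : ℝ) ≤ (A ∩ S).card := Nat.cast_le.2 (hr.le_card _)
  have h_sdiff : ((A \ S).card : ℝ) + (A ∩ S).card = A.card := by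
    exact_mod_cast Finset.card_sdiff_add_card_inter A S
  set u : ℝ := r A - (d - r S + r (A ∩ S)) with hu
  have hu0 : 0 ≤ u := by linarith
  have h_outer : θ * (A \ S).card ≤ r A - r (A ∩ S) :=
    calc θ * (A \ S).card ≤ θ * (n + 1 - r S + u) := by
          gcongr
          linarith
      _ ≤ d - r S + u := by linarith [mul_le_of_le_one_left hu0 hθ1]
      _ = r A - r (A ∩ S) := by rw [hu]; ring
  rw [Finset.sum_piecewise, Finset.sum_const, nsmul_eq_mul]
  linarith

theorem IsPartialNochkaWeight.isNochkaWeight [Fintype ι] (hω : IsPartialNochkaWeight r d n S ω)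
    (hr : IsSubgeneralRank r d n) (hn : n + 1 ≤ Fintype.card ι)
    (hθ : θ * (2 * n - d + 2 - S.card) = d - r S)
    (h_slope : ∀ T, S ⊂ T → r T < d → θ * (T.card - S.card) ≤ r T - r S) :
    IsNochkaWeight r d n (S.piecewise ω fun _ => θ) θ := by
  have h_card := hr.card_add_le_of_lt hn hω.rank_lt
  have h_rank : (r S : ℝ) + 1 ≤ d := by exact_mod_cast hω.rank_lt
  have h_dim := hr.dim_le hn
  have h_pos : (0 : ℝ) < 2 * n - d + 2 - S.card := by linarith
  have hθ0 : 0 < θ := pos_of_mul_pos_left (by linarith) h_pos.le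
  have hθ1 : θ ≤ 1 := le_of_mul_le_mul_right (by linarith) h_pos
  refine ⟨hθ0, ?_, ?_, ?_, ?_⟩
  · intro j
    by_cases hj : j ∈ S <;> simp [hj, hθ0.le, hω.nonneg]
  · intro j
    by_cases hj : j ∈ S
    · rw [Finset.piecewise_eq_of_mem _ _ _ hj]
      exact le_of_mul_le_mul_right (hθ ▸ hω.mul_sub_card_le j hj) h_pos
    · rw [Finset.piecewise_eq_of_notMem _ _ _ hj]
  · rw [Finset.sum_piecewise, Finset.univ_inter, hω.sum_eq, Finset.sum_const, nsmul_eq_mul,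
      Finset.cast_card_sdiff (Finset.subset_univ S), Finset.card_univ]
    linarith
  · intro A hA
    by_cases h_full : r (A ∪ S) < d
    · refine hr.sum_piecewise_le_rank hω.sum_le_rank ?_
      rcases (Finset.subset_union_right : S ⊆ A ∪ S).eq_or_ssubset with h_eq | h_ss
      · simp [← h_eq]
      · exact h_slope _ h_ss h_full
    · refine hω.sum_piecewise_le_rank_of_le hr hn hA (not_lt.1 h_full) hθ0.le hθ1 ?_
      exact (mul_le_mul_of_nonneg_left (by linarith) hθ0.le).trans hθ.le

theorem IsSubgeneralRank.exists_isNochkaWeight [Fintype ι] (hr : IsSubgeneralRank r d n)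
    (hd : 0 < d) (hn : n + 1 ≤ Fintype.card ι) : ∃ ω θ, IsNochkaWeight r d n ω θ := by
  classical
  obtain ⟨S, hS, h_max⟩ := Finset.exists_max_image
    (Finset.univ.filter fun S => ∃ ω, IsPartialNochkaWeight r d n S ω) Finset.card
    ⟨∅, by simpa using ⟨0, IsPartialNochkaWeight.empty hr.toIsRankFunction hd⟩⟩
  obtain ⟨ω, hω⟩ : ∃ ω, IsPartialNochkaWeight r d n S ω := by simpa using hS
  have h_pos : (0 : ℝ) < 2 * n - d + 2 - S.card := by
    have h_card := hr.card_add_le_of_lt hn hω.rank_lt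
    have h_rank : (r S : ℝ) + 1 ≤ d := by exact_mod_cast hω.rank_lt
    linarith [hr.dim_le hn]
  have hθ : ((d : ℝ) - r S) / (2 * n - d + 2 - S.card) * (2 * n - d + 2 - S.card) = d - r S :=
    div_mul_cancel₀ _ h_pos.ne'
  refine ⟨_, _, hω.isNochkaWeight hr hn hθ fun T hST hT => ?_⟩
  set θ := ((d : ℝ) - r S) / (2 * n - d + 2 - S.card)
  by_contra! h_lt
  obtain ⟨T', hST', hT', σ, hσ, h_min⟩ := exists_min_slope hST hT
  have hσθ : σ ≤ θ :=
    le_of_mul_le_mul_right ((h_min T hST hT).trans h_lt.le) (sub_card_pos_of_ssubset hST)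
  have h_ext := hω.piecewise hr hn hST' hT' hσ h_min
    ((mul_le_mul_of_nonneg_right hσθ h_pos.le).trans hθ.le)
  exact (h_max T' (by simpa using ⟨_, h_ext⟩)).not_gt (Finset.card_lt_card hST')

theorem IsRankFunction.exists_basis_insert (hr : IsRankFunction r) {j : ι} {R B : Finset ι}
    (hj : j ∉ R) (hBR : B ⊆ R) (hB : B.card = r R) (hBr : r B = B.card) :
    ∃ B', B ⊆ B' ∧ B' ⊆ insert j R ∧ B'.card = r (insert j R) ∧ r B' = B'.card := by
  rcases (hr.mono (Finset.subset_insert j R)).eq_or_lt with h_eq | h_lt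
  · exact ⟨B, subset_rfl, hBR.trans (Finset.subset_insert j R), hB.trans h_eq, hBr⟩
  · refine ⟨insert j B, Finset.subset_insert j B, Finset.insert_subset_insert j hBR, ?_⟩
    have hjB : j ∉ B := fun h => hj (hBR h)
    have h_insert := hr.submodular R (insert j B)
    have h_single := hr.submodular R {j}
    have h_card := hr.le_card (insert j B)
    have h_card' := hr.le_card {j}
    rw [Finset.union_insert, Finset.union_eq_left.2 hBR, Finset.inter_comm,
      Finset.insert_inter_of_notMem hj, Finset.inter_eq_left.2 hBR] at h_insert
    rw [Finset.union_comm, ← Finset.insert_eq] at h_single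
    rw [Finset.card_singleton] at h_card'
    rw [Finset.card_insert_of_notMem hjB] at h_card ⊢
    omega

/- The greedy algorithm: adding the elements of `R` by decreasing value of `x`, enlarge the basis
whenever the rank increases. -/
theorem IsRankFunction.exists_basis_sum_le (hr : IsRankFunction r) {R : Finset ι}
    (hω : ∀ A ⊆ R, ∑ j ∈ A, ω j ≤ r A) {x : ι → ℝ} (hx : ∀ j ∈ R, 0 ≤ x j) :
    ∃ B ⊆ R, B.card = r R ∧ r B = B.card ∧ ∑ j ∈ R, ω j * x j ≤ ∑ j ∈ B, x j := by
  suffices h : ∀ c, (∀ j ∈ R, c ≤ x j) → ∃ B ⊆ R, B.card = r R ∧ r B = B.card ∧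
      ∑ j ∈ R, ω j * (x j - c) ≤ ∑ j ∈ B, (x j - c) by
    simpa only [sub_zero] using h 0 hx
  clear hx
  induction R using Finset.induction_on_min_value x with
  | empty => exact fun _ _ => ⟨∅, by simp [hr.empty]⟩
  | insert a s ha h_min ih =>
    intro c hc
    obtain ⟨B, hBs, hB, hBr, h_sum⟩ :=
      ih (fun A hA => hω A (hA.trans (Finset.subset_insert a s))) (x a) h_min
    obtain ⟨B', hBB', hB's, hB', hB'r⟩ := hr.exists_basis_insert ha hBs hB hBr
    refine ⟨B', hB's, hB', hB'r, ?_⟩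
    have h_min' : ∀ j ∈ insert a s, x a ≤ x j := by simpa using h_min
    calc ∑ j ∈ insert a s, ω j * (x j - c)
        = ∑ j ∈ s, ω j * (x j - x a) + (x a - c) * ∑ j ∈ insert a s, ω j := by
          rw [Finset.sum_insert ha, Finset.sum_insert ha, mul_add, Finset.mul_sum, add_left_comm,
            ← Finset.sum_add_distrib, mul_comm (ω a)]
          exact congrArg _ (Finset.sum_congr rfl fun j _ => by ring)
      _ ≤ ∑ j ∈ B', (x j - x a) + (x a - c) * r (insert a s) := by
          refine add_le_add (h_sum.trans ?_) (mul_le_mul_of_nonneg_left (hω _ subset_rfl)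
            (sub_nonneg.2 (hc a (Finset.mem_insert_self a s))))
          exact Finset.sum_le_sum_of_subset_of_nonneg hBB'
            fun j hj _ => sub_nonneg.2 (h_min' j (hB's hj))
      _ = ∑ j ∈ B', (x j - c) := by
          rw [← hB']
          simp only [Finset.sum_sub_distrib, Finset.sum_const, nsmul_eq_mul]
          ring

end NochkaWeights

/-! ### Vectors in subgeneral position -/

section SubgeneralPosition

open Module

variable {K V W ι : Type*} [Field K] [AddCommGroup V] [Module K V] [AddCommGroup W] [Module K W]
  {b : ι → V} {n : ℕ}

variable (K) in
/-- A family of vectors, thought of as the linear forms defining a family of hyperplanes, is in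
`n`-subgeneral position if any `n + 1` members span. -/
def InSubgeneralPosition (b : ι → V) (n : ℕ) : Prop :=
  ∀ A : Finset ι, A.card = n + 1 → Submodule.span K (b '' A) = ⊤

variable (K) in
/-- The dimension of the span of a finite subfamily. -/
noncomputable def spanRank (b : ι → V) (A : Finset ι) : ℕ :=
  finrank K (Submodule.span K (b '' A))

theorem isRankFunction_spanRank [DecidableEq ι] [FiniteDimensional K V] (b : ι → V) :
    IsRankFunction (spanRank K b) where
  mono A B hAB :=
    Submodule.finrank_mono (Submodule.span_mono (Set.image_mono (Finset.coe_subset.2 hAB)))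
  submodular A B := by
    have h_inter : Submodule.span K (b '' (A ∩ B : Finset ι)) ≤
        Submodule.span K (b '' A) ⊓ Submodule.span K (b '' B) :=
      le_inf (Submodule.span_mono (Set.image_mono (Finset.coe_subset.2 Finset.inter_subset_left)))
        (Submodule.span_mono (Set.image_mono (Finset.coe_subset.2 Finset.inter_subset_right)))
    have h_union : Submodule.span K (b '' (A ∪ B : Finset ι)) =
        Submodule.span K (b '' A) ⊔ Submodule.span K (b '' B) := by
      rw [Finset.coe_union, Set.image_union, Submodule.span_union]
    rw [spanRank, h_union, spanRank, spanRank, spanRank, ←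
      Submodule.finrank_sup_add_finrank_inf_eq (Submodule.span K (b '' A))]
    exact Nat.add_le_add_left (Submodule.finrank_mono h_inter) _
  le_card A := by
    classical
    have h := finrank_span_finset_le_card (R := K) (A.image b)
    rw [Set.finrank, Finset.coe_image] at h
    exact h.trans Finset.card_image_le

namespace InSubgeneralPosition

theorem span_eq_top (hb : InSubgeneralPosition K b n) {A : Finset ι} (hA : n < A.card) :
    Submodule.span K (b '' A) = ⊤ := by
  obtain ⟨B, hBA, hB⟩ := Finset.exists_subset_card_eq hA
  rw [eq_top_iff, ← hb B hB]
  exact Submodule.span_mono (Set.image_mono (Finset.coe_subset.2 hBA))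

theorem isSubgeneralRank [DecidableEq ι] [FiniteDimensional K V]
    (hb : InSubgeneralPosition K b n) :
    IsSubgeneralRank (spanRank K b) (finrank K V) n where
  toIsRankFunction := isRankFunction_spanRank b
  eq_of_lt_card A hA := by rw [spanRank, hb.span_eq_top hA, finrank_top]

theorem map (hb : InSubgeneralPosition K b n) {f : V →ₗ[K] W} (hf : Function.Surjective f) :
    InSubgeneralPosition K (fun j => f (b j)) n := by
  intro A hA
  rw [← Set.image_image f b, Submodule.span_image, hb A hA, Submodule.map_top,
    LinearMap.range_eq_top.2 hf]

theorem card_filter_eq_zero_le [Fintype ι] [Nontrivial V] [DecidablePred fun j => b j = 0]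
    (hb : InSubgeneralPosition K b n) :
    (Finset.univ.filter fun j => b j = 0).card ≤ n := by
  by_contra! h
  refine bot_ne_top (α := Submodule K V) (Eq.trans ?_ (hb.span_eq_top h))
  rw [eq_comm, Submodule.span_eq_bot]
  rintro _ ⟨j, hj, rfl⟩
  simpa using hj

theorem subtype_ne_zero [Fintype ι] [DecidablePred fun j => b j = 0]
    (hb : InSubgeneralPosition K b (n + (Finset.univ.filter fun j => b j = 0).card)) :
    InSubgeneralPosition K (fun j : {j // b j ≠ 0} => b j) n := by
  classical
  intro A hA
  set Z : Finset ι := Finset.univ.filter fun j => b j = 0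
  have h_disj : Disjoint (A.map (Function.Embedding.subtype _)) Z := by
    simp +contextual [Finset.disjoint_left, Z]
  have h_span := hb (A.map (Function.Embedding.subtype _) ∪ Z) (by
    rw [Finset.card_union_of_disjoint h_disj, Finset.card_map, hA, add_right_comm])
  rw [eq_top_iff, ← h_span, Submodule.span_le]
  rintro _ ⟨j, hj, rfl⟩
  rcases Finset.mem_union.1 hj with hj | hj
  · obtain ⟨i, hi, rfl⟩ := Finset.mem_map.1 hj
    exact Submodule.subset_span ⟨i, hi, rfl⟩
  · simp [(Finset.mem_filter.1 hj).2]

theorem of_det_ne_zero [LinearOrder ι] {N : ℕ} {a : ι → Fin (N + 1) → K}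
    (ha : ∀ e : Fin (N + 1) → ι, StrictMono e → (Matrix.of fun k i => a (e k) i).det ≠ 0) :
    InSubgeneralPosition K a N := by
  intro A hA
  have h_li := Matrix.linearIndependent_rows_of_det_ne_zero
    (ha (A.orderEmbOfFin hA) (A.orderEmbOfFin hA).strictMono)
  rw [eq_top_iff, ← h_li.span_eq_top_of_card_eq_finrank' (by simp)]
  refine Submodule.span_mono ?_
  rintro _ ⟨k, rfl⟩
  exact ⟨A.orderEmbOfFin hA k, A.orderEmbOfFin_mem hA k, rfl⟩

end InSubgeneralPosition

theorem det_ne_zero_of_spanRank_eq {d : ℕ} {b : ι → Fin d → K} {B : Finset ι}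
    (hB : B.card = d) (hBr : spanRank K b B = d) :
    (Matrix.of fun i => b ((B.equivFinOfCardEq hB).symm i)).det ≠ 0 := by
  set e := (B.equivFinOfCardEq hB).symm
  have h_range : Set.range (fun i => b (e i)) = b '' B := by
    rw [← Function.comp_def b, Set.range_comp, ← Function.comp_def _ e, e.surjective.range_comp]
    simp
  have h_li : LinearIndependent K fun i => b (e i) := by
    refine linearIndependent_of_top_le_span_of_card_eq_finrank ?_ (by simp)
    rw [h_range, top_le_iff]
    exact Submodule.eq_top_of_finrank_eq (hBr.trans (by simp))
  exact ((Matrix.isUnit_iff_isUnit_det _).1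
    (Matrix.linearIndependent_rows_iff_isUnit.1 h_li)).ne_zero

theorem IsNochkaWeight.exists_det_ne_zero_sum_le [Fintype ι] {d : ℕ}
    {b : ι → Fin d → K} {ω : ι → ℝ} {θ : ℝ} (hω : IsNochkaWeight (spanRank K b) d n ω θ)
    (hb : InSubgeneralPosition K b n) {R : Finset ι} (hR : R.card = n + 1) {x : ι → ℝ}
    (hx : ∀ j ∈ R, 0 ≤ x j) :
    ∃ e : Fin d → ι, (∀ i, e i ∈ R) ∧ (Matrix.of fun i => b (e i)).det ≠ 0 ∧
      ∑ j ∈ R, ω j * x j ≤ ∑ i, x (e i) := by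
  classical
  obtain ⟨B, hBR, hB, hBr, h_sum⟩ := (isRankFunction_spanRank (K := K) b).exists_basis_sum_le
    (fun A hA => hω.sum_le_rank A ((Finset.card_le_card hA).trans hR.le)) hx
  rw [hb.isSubgeneralRank.eq_of_lt_card R (by omega), finrank_fin_fun] at hB
  refine ⟨fun i => (B.equivFinOfCardEq hB).symm i, fun i => hBR (Subtype.prop _),
    det_ne_zero_of_spanRank_eq hB (hBr.trans hB), h_sum.trans_eq ?_⟩
  rw [Equiv.sum_comp (B.equivFinOfCardEq hB).symm (fun j => x j), Finset.sum_coe_sort B x]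

/- The vectors `F l` are a basis of the span of the `v i`, and `Φ u` consists of the coordinates
of `∑ i, u i • v i`. -/
theorem exists_linearIndependent_linearCombination_eq {κ : Type*} [Fintype κ] (v : κ → V) :
    ∃ (d : ℕ) (F : Fin d → V) (Φ : (κ → K) →ₗ[K] (Fin d → K)), LinearIndependent K F ∧
      Function.Surjective Φ ∧
      (∀ u, ∑ l, Φ u l • F l = ∑ i, u i • v i) ∧ ∀ l, ∃ u : κ → K, F l = ∑ i, u i • v i := by
  set T := Fintype.linearCombination K v
  set B := Module.finBasis K T.range
  refine ⟨finrank K T.range, fun l => B l, B.equivFun.toLinearMap ∘ₗ T.rangeRestrict,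
    B.linearIndependent.map' T.range.subtype T.range.ker_subtype,
    B.equivFun.surjective.comp T.surjective_rangeRestrict, fun u => ?_, fun l => ?_⟩
  · have h := congrArg T.range.subtype (B.sum_equivFun (T.rangeRestrict u))
    rw [map_sum] at h
    exact h
  · obtain ⟨u, hu⟩ := (B l).2
    exact ⟨u, hu.symm⟩

end SubgeneralPosition

section NormBound

variable {𝕜 ι κ : Type*} [NontriviallyNormedField 𝕜] [CompleteSpace 𝕜] [Fintype κ]

theorem exists_pos_mul_norm_le_of_span_eq_top {b : ι → κ → 𝕜} {A : Finset ι}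
    (hA : A.Nonempty) (hb : Submodule.span 𝕜 (b '' A) = ⊤) :
    ∃ δ : ℝ, 0 < δ ∧ ∀ v, ∃ j ∈ A, δ * ‖v‖ ≤ ‖b j ⬝ᵥ v‖ := by
  set L := (Matrix.of fun j : A => b j).mulVecLin
  have h_ker : L.ker = ⊥ := by
    refine LinearMap.ker_eq_bot'.2 fun v hv => dotProduct_eq_zero v fun w => ?_
    have hw : w ∈ Submodule.span 𝕜 (b '' A) := hb ▸ Submodule.mem_top
    induction hw using Submodule.span_induction with
    | mem x hx =>
      obtain ⟨j, hj, rfl⟩ := hx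
      rw [dotProduct_comm]
      exact congrFun hv ⟨j, hj⟩
    | zero => exact dotProduct_zero v
    | add x y _ _ hx hy => rw [dotProduct_add, hx, hy, add_zero]
    | smul c x _ hx => rw [dotProduct_smul, hx, smul_zero]
  obtain ⟨C, hC, hL⟩ := L.exists_antilipschitzWith h_ker
  refine ⟨(C : ℝ)⁻¹, inv_pos.2 hC, fun v => ?_⟩
  have : Nonempty A := hA.coe_sort
  obtain ⟨j, hj⟩ := Finite.exists_max fun j => ‖L v j‖
  refine ⟨j, j.2, le_trans ?_ ((pi_norm_le_iff_of_nonneg (norm_nonneg _)).2 hj)⟩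
  rw [inv_mul_le_iff₀ (by exact_mod_cast hC)]
  simpa using hL.le_mul_dist v 0

theorem InSubgeneralPosition.exists_pos_forall_notMem_mul_norm_le [Fintype ι] {n : ℕ}
    {b : ι → κ → 𝕜} (hb : InSubgeneralPosition 𝕜 b n) (hn : n + 1 ≤ Fintype.card ι) :
    ∃ δ : ℝ, 0 < δ ∧ ∀ v, ∃ R : Finset ι, R.card = n + 1 ∧
      ∀ j, j ∉ R → δ * ‖v‖ ≤ ‖b j ⬝ᵥ v‖ := by
  classical
  have h_each : ∀ A : Finset ι, ∃ δ : ℝ, 0 < δ ∧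
      (A.card = n + 1 → ∀ v, ∃ j ∈ A, δ * ‖v‖ ≤ ‖b j ⬝ᵥ v‖) := by
    intro A
    by_cases hA : A.card = n + 1
    · obtain ⟨δ, hδ, h⟩ := exists_pos_mul_norm_le_of_span_eq_top
        (Finset.card_pos.1 (by omega)) (hb A hA)
      exact ⟨δ, hδ, fun _ => h⟩
    · exact ⟨1, one_pos, fun h => absurd h hA⟩
  choose δ hδ0 hδ using h_each
  obtain ⟨A₀, h_min⟩ := Finite.exists_min δ
  refine ⟨δ A₀, hδ0 A₀, fun v => ?_⟩
  set Z : Finset ι := Finset.univ.filter fun j => ‖b j ⬝ᵥ v‖ < δ A₀ * ‖v‖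
  have hZ : Z.card ≤ n + 1 := by
    by_contra! h_card
    obtain ⟨A, hAZ, hA⟩ := Finset.exists_subset_card_eq h_card.le
    obtain ⟨j, hjA, hj⟩ := hδ A hA v
    have h_le := mul_le_mul_of_nonneg_right (h_min A) (norm_nonneg v)
    exact (Finset.mem_filter.1 (hAZ hjA)).2.not_ge (h_le.trans hj)
  obtain ⟨R, hZR, -, hR⟩ := Finset.exists_subsuperset_card_eq (Finset.subset_univ Z) hZ
    (by simpa using hn)
  refine ⟨R, hR, fun j hj => ?_⟩
  by_contra! h_lt
  exact hj (hZR (Finset.mem_filter.2 ⟨Finset.mem_univ j, h_lt⟩))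

end NormBound

/-! ### Circle averages of logarithms of entire functions -/

section EntireCircleAverage

open Real Filter Metric

variable {g h : ℂ → ℂ} {ρ r R : ℝ} {x : ℂ}

theorem eventually_codiscreteWithin_ne_zero (hg : Differentiable ℂ g) (hx : g x ≠ 0) (S : Set ℂ) :
    ∀ᶠ z in codiscreteWithin S, g z ≠ 0 :=
  codiscreteWithin_mono (Set.subset_univ S)
    (AnalyticOnNhd.preimage_zero_mem_codiscrete (fun z _ => hg.analyticAt z) hx)

theorem circleIntegrable_log_norm (hg : Differentiable ℂ g) (R : ℝ) :
    CircleIntegrable (fun z => log ‖g z‖) 0 R :=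
  MeromorphicOn.circleIntegrable_log_norm fun z _ => (hg.analyticAt z).meromorphicAt

theorem circleAverage_mono_of_codiscreteWithin {u v : ℂ → ℝ} (hR : R ≠ 0)
    (hu : CircleIntegrable u 0 R) (hv : CircleIntegrable v 0 R)
    (huv : ∀ᶠ z in codiscreteWithin (sphere 0 |R|), ‖z‖ = |R| → u z ≤ v z) :
    circleAverage u 0 R ≤ circleAverage v 0 R := by
  have h_max : v =ᶠ[codiscreteWithin (sphere 0 |R|)] fun z => max (u z) (v z) := by
    filter_upwards [huv, self_mem_codiscreteWithin _] with z hz hzR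
    exact (max_eq_right (hz (by simpa using hzR))).symm
  rw [circleAverage_congr_codiscreteWithin h_max hR]
  exact circleAverage_mono hu (hv.congr_codiscreteWithin h_max) fun z _ => le_max_left _ _

theorem analyticOrderAt_ne_top (hg : Differentiable ℂ g) (hx : g x ≠ 0) (u : ℂ) :
    analyticOrderAt g u ≠ ⊤ := by
  intro h_top
  have hg' : AnalyticOnNhd ℂ g Set.univ := fun z _ => hg.analyticAt z
  exact hx (hg'.eqOn_zero_of_preconnected_of_eventuallyEq_zero isPreconnected_univ
    (Set.mem_univ u) (analyticOrderAt_eq_top.1 h_top) (Set.mem_univ x))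

theorem divisor_closedBall_apply (hg : Differentiable ℂ g) (hx : g x ≠ 0) {u : ℂ}
    (hu : u ∈ closedBall 0 r) :
    MeromorphicOn.divisor g (closedBall 0 r) u = analyticOrderNatAt g u := by
  rw [MeromorphicOn.divisor_apply (fun z _ => (hg.analyticAt z).meromorphicAt) hu,
    (hg.analyticAt u).meromorphicOrderAt_eq,
    ← Nat.cast_analyticOrderNatAt (analyticOrderAt_ne_top hg hx u)]
  simp

/- The positive part of the logarithm makes the terms outside the disc vanish. -/
theorem divisor_closedBall_mul_log (hg : Differentiable ℂ g) (hx : g x ≠ 0) (hr : 0 < r) (u : ℂ) :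
    MeromorphicOn.divisor g (closedBall 0 r) u * log (r * ‖u‖⁻¹) =
      analyticOrderNatAt g u * log⁺ (r * ‖u‖⁻¹) := by
  rcases eq_or_ne u 0 with rfl | hu0
  · simp
  have hu_pos := norm_pos_iff.2 hu0
  by_cases hu : u ∈ closedBall 0 r
  · have h_one : 1 ≤ r * ‖u‖⁻¹ := by
      rw [← div_eq_mul_inv, one_le_div hu_pos]
      simpa using hu
    rw [divisor_closedBall_apply hg hx hu, posLog_eq_log (h_one.trans (le_abs_self _))]
    simp
  · have h_one : r * ‖u‖⁻¹ ≤ 1 := by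
      rw [← div_eq_mul_inv, div_le_one hu_pos]
      exact (by simpa using hu : r < ‖u‖).le
    rw [Function.locallyFinsuppWithin.apply_eq_zero_of_notMem _ hu,
      (posLog_eq_zero_iff _).2 (abs_le.2 ⟨by linarith [show 0 < r * ‖u‖⁻¹ by positivity], h_one⟩)]
    simp

theorem finite_support_analyticOrderNatAt_mul_posLog (hg : Differentiable ℂ g) (hx : g x ≠ 0)
    (hr : 0 < r) :
    (Function.support fun u => (analyticOrderNatAt g u : ℝ) * log⁺ (r * ‖u‖⁻¹)).Finite := by
  refine ((MeromorphicOn.divisor g (closedBall 0 r)).finiteSupport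
    (isCompact_closedBall 0 r)).subset fun u hu h_zero => hu ?_
  simp [← divisor_closedBall_mul_log hg hx hr, h_zero]

theorem circleAverage_log_norm_eq_finsum (hg : Differentiable ℂ g) (hx : g x ≠ 0) (hr : 0 < r) :
    circleAverage (fun z => log ‖g z‖) 0 r =
      ∑ᶠ u, (analyticOrderNatAt g u : ℝ) * log⁺ (r * ‖u‖⁻¹) +
        analyticOrderNatAt g 0 * log r + log ‖meromorphicTrailingCoeffAt g 0‖ := by
  rw [MeromorphicOn.circleAverage_log_norm hr.ne' fun z _ => (hg.analyticAt z).meromorphicAt,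
    abs_of_pos hr, divisor_closedBall_apply hg hx (mem_closedBall_self hr.le)]
  simp only [zero_sub, norm_neg, divisor_closedBall_mul_log hg hx hr, Int.cast_natCast]

theorem analyticOrderNatAt_mul_log_add_le_circleAverage (hg : Differentiable ℂ g) (hx : g x ≠ 0)
    (hr : 0 < r) :
    analyticOrderNatAt g 0 * log r + log ‖meromorphicTrailingCoeffAt g 0‖ ≤
      circleAverage (fun z => log ‖g z‖) 0 r := by
  rw [circleAverage_log_norm_eq_finsum hg hx hr, add_assoc]
  exact le_add_of_nonneg_left (finsum_nonneg fun u => mul_nonneg (Nat.cast_nonneg _) posLog_nonneg)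

theorem circleAverage_log_norm_sub_log_norm (hg : Differentiable ℂ g) (h0 : g 0 ≠ 0)
    (hr : 0 < r) :
    circleAverage (fun z => log ‖g z‖) 0 r - log ‖g 0‖ =
      ∑ᶠ u, (analyticOrderNatAt g u : ℝ) * log⁺ (r * ‖u‖⁻¹) := by
  have h_order : analyticOrderNatAt g 0 = 0 :=
    by_contra fun h => h0 (apply_eq_zero_of_analyticOrderNatAt_ne_zero h)
  rw [circleAverage_log_norm_eq_finsum hg h0 hr, h_order,
    (hg.analyticAt 0).meromorphicTrailingCoeffAt_of_ne_zero h0]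
  simp

theorem log_norm_le_circleAverage (hg : Differentiable ℂ g) (h0 : g 0 ≠ 0) (hr : 0 < r) :
    log ‖g 0‖ ≤ circleAverage (fun z => log ‖g z‖) 0 r := by
  rw [← sub_nonneg, circleAverage_log_norm_sub_log_norm hg h0 hr]
  exact finsum_nonneg fun u => mul_nonneg (Nat.cast_nonneg _) posLog_nonneg

end EntireCircleAverage

section ZeroFactorization

open Real Filter

variable {g h : ℂ → ℂ} {ρ R : ℝ} {n : ℕ} {a : Fin n → ℂ} {z w : ℂ}

/-- The entire function `h` is obtained from `g` by splitting off linear factors vanishing at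
points `a i` of the closed disc of radius `ρ`. Not all zeros in this disc need to be split off. -/
structure IsZeroFactorization (ρ : ℝ) {n : ℕ} (a : Fin n → ℂ) (g h : ℂ → ℂ) : Prop where
  norm_le : ∀ i, ‖a i‖ ≤ ρ
  differentiable : Differentiable ℂ h
  eq_prod_mul : ∀ z, g z = (∏ i, (z - a i)) * h z

namespace IsZeroFactorization

theorem sub_ne_zero (hf : IsZeroFactorization ρ a g h) (hz : g z ≠ 0) (i : Fin n) :
    z - a i ≠ 0 := by
  rw [hf.eq_prod_mul] at hz
  exact Finset.prod_ne_zero_iff.1 (left_ne_zero_of_mul hz) i (Finset.mem_univ i)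

theorem log_norm_eq (hf : IsZeroFactorization ρ a g h) (hz : g z ≠ 0) :
    log ‖g z‖ = ∑ i, log ‖z - a i‖ + log ‖h z‖ := by
  have h_ne := hz
  rw [hf.eq_prod_mul] at h_ne
  rw [hf.eq_prod_mul, norm_mul, norm_prod,
    log_mul (Finset.prod_ne_zero_iff.2 fun i _ => norm_ne_zero_iff.2 (hf.sub_ne_zero hz i))
      (norm_ne_zero_iff.2 (right_ne_zero_of_mul h_ne)),
    log_prod fun i _ => norm_ne_zero_iff.2 (hf.sub_ne_zero hz i)]

theorem circleAverage_log_norm (hf : IsZeroFactorization ρ a g h) (hg : Differentiable ℂ g)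
    (h0 : g 0 ≠ 0) (hR : 0 < R) (hρR : ρ ≤ R) :
    circleAverage (fun z => log ‖g z‖) 0 R =
      n * log R + circleAverage (fun z => log ‖h z‖) 0 R := by
  have h_int : ∀ i, CircleIntegrable (fun z => log ‖z - a i‖) 0 R :=
    fun i => circleIntegrable_log_norm_sub_const _
  have h_avg : ∀ i, circleAverage (fun z => log ‖z - a i‖) 0 R = log R := fun i =>
    circleAverage_log_norm_sub_const_of_mem_closedBall <| by
      simpa [abs_of_pos hR] using (hf.norm_le i).trans hρR
  rw [circleAverage_congr_codiscreteWithin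
      ((eventually_codiscreteWithin_ne_zero hg h0 _).mono fun z hz => hf.log_norm_eq hz) hR.ne',
    circleAverage_fun_add (CircleIntegrable.fun_sum _ fun i _ => h_int i)
      (circleIntegrable_log_norm hf.differentiable R),
    circleAverage_fun_sum fun i _ => h_int i]
  simp [h_avg]

theorem card_mul_log_le (hf : IsZeroFactorization ρ a g h) (hg : Differentiable ℂ g)
    (h0 : g 0 ≠ 0) (hρ : 0 < ρ) (hρR : ρ ≤ R) :
    n * (log R - log ρ) ≤ circleAverage (fun z => log ‖g z‖) 0 R - log ‖g 0‖ := by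
  have hR := hρ.trans_le hρR
  have hh0 : h 0 ≠ 0 := by
    rw [hf.eq_prod_mul] at h0
    exact right_ne_zero_of_mul h0
  have h_jensen := log_norm_le_circleAverage hf.differentiable hh0 hR
  have h_zeros : ∑ i, log ‖0 - a i‖ ≤ n * log ρ := by
    have h_each : ∀ i, log ‖0 - a i‖ ≤ log ρ := fun i =>
      log_le_log (norm_pos_iff.2 (hf.sub_ne_zero h0 i)) (by simpa using hf.norm_le i)
    simpa using Finset.sum_le_card_nsmul Finset.univ _ _ fun i _ => h_each i
  rw [hf.circleAverage_log_norm hg h0 hR hρR, hf.log_norm_eq h0]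
  linarith

theorem cons (hf : IsZeroFactorization ρ a g h) (hw : ‖w‖ ≤ ρ) (hhw : h w = 0) :
    IsZeroFactorization ρ (Fin.cons w a : Fin (n + 1) → ℂ) g (dslope h w) where
  norm_le := Fin.cases hw hf.norm_le
  differentiable := differentiableOn_univ.1
    ((Complex.differentiableOn_dslope univ_mem).2 hf.differentiable.differentiableOn)
  eq_prod_mul z := by
    have h_slope := sub_smul_dslope h w z
    rw [hhw, sub_zero, smul_eq_mul] at h_slope
    rw [hf.eq_prod_mul, Fin.prod_univ_succ, ← h_slope]
    simp only [Fin.cons_zero, Fin.cons_succ]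
    ring

end IsZeroFactorization

theorem exists_isZeroFactorization (hg : Differentiable ℂ g) (h0 : g 0 ≠ 0) (hρ : 0 < ρ) :
    ∃ (n : ℕ) (a : Fin n → ℂ) (h : ℂ → ℂ), IsZeroFactorization ρ a g h ∧
      ∀ z, ‖z‖ ≤ ρ → h z ≠ 0 := by
  set P : ℕ → Prop := fun n => ∃ (a : Fin n → ℂ) (h : ℂ → ℂ), IsZeroFactorization ρ a g h
  have h_zero : P 0 := ⟨Fin.elim0, g, fun i => i.elim0, hg, fun z => by simp⟩
  have h_bdd : BddAbove {n | P n} := by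
    obtain ⟨B, hB⟩ := exists_nat_ge
      ((circleAverage (fun z => log ‖g z‖) 0 (2 * ρ) - log ‖g 0‖) / log 2)
    refine ⟨B, fun n ⟨a, h, hf⟩ => ?_⟩
    have h_card := hf.card_mul_log_le hg h0 hρ (by linarith : ρ ≤ 2 * ρ)
    rw [log_mul two_ne_zero hρ.ne', add_sub_cancel_right] at h_card
    exact_mod_cast ((le_div_iff₀ (log_pos one_lt_two)).2 h_card).trans hB
  obtain ⟨a, h, hf⟩ := Nat.sSup_mem ⟨0, h_zero⟩ h_bdd
  refine ⟨_, a, h, hf, fun w hw hhw => ?_⟩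
  exact absurd (le_csSup h_bdd ⟨_, _, hf.cons hw hhw⟩) (Nat.not_succ_le_self _)

end ZeroFactorization

/-! ### Estimates on circles -/

section CircleEstimates

open Real Metric

variable {ρ : ℝ} {a z w x : ℂ} {u : ℂ → ℝ}

theorem inv_sqrt_abs_sin_le {t : ℝ} (ht0 : 0 < t) (ht : t ≤ π / 2) :
    (√|sin t|)⁻¹ ≤ 2 * t ^ (-(1 / 2) : ℝ) := by
  have h_four : (1 : ℝ) / 4 ≤ 2 / π := by
    rw [div_le_div_iff₀ (by norm_num) pi_pos]
    linarith [pi_le_four]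
  have h_sin : t / 2 ^ 2 ≤ |sin t| :=
    calc t / 2 ^ 2 = 1 / 4 * t := by ring
      _ ≤ 2 / π * t := by gcongr
      _ ≤ sin t := mul_le_sin ht0.le ht
      _ ≤ |sin t| := le_abs_self _
  have h_sqrt := sqrt_le_sqrt h_sin
  rw [sqrt_div' _ (by positivity), sqrt_sq zero_le_two] at h_sqrt
  rw [rpow_neg ht0.le, ← sqrt_eq_rpow]
  calc (√|sin t|)⁻¹ ≤ (√t / 2)⁻¹ := inv_anti₀ (half_pos (sqrt_pos.2 ht0)) h_sqrt
    _ = 2 * (√t)⁻¹ := by rw [inv_div, div_eq_mul_inv]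

theorem intervalIntegrable_inv_sqrt_abs_sin (A B : ℝ) :
    IntervalIntegrable (fun t : ℝ => (√|sin t|)⁻¹) MeasureTheory.volume A B := by
  have h_left :
      IntervalIntegrable (fun t : ℝ => (√|sin t|)⁻¹) MeasureTheory.volume 0 (π / 2) := by
    have h_rpow := (intervalIntegral.intervalIntegrable_rpow' (a := 0) (b := π / 2)
      (r := -(1 / 2)) (by norm_num)).const_mul 2
    refine h_rpow.mono_fun' (by fun_prop) ?_
    refine MeasureTheory.ae_restrict_of_forall_mem measurableSet_uIoc fun t ht => ?_
    rw [Set.uIoc_of_le (by positivity)] at ht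
    exact (norm_of_nonneg (by positivity)).trans_le (inv_sqrt_abs_sin_le ht.1 ht.2)
  have h_right := (h_left.comp_sub_left π).symm
  simp only [sin_pi_sub, sub_zero, sub_half] at h_right
  have h_periodic : Function.Periodic (fun t : ℝ => (√|sin t|)⁻¹) π := by
    intro t
    simp [sin_add_pi]
  exact h_periodic.intervalIntegrable (t := 0) pi_ne_zero
    (by simpa using h_left.trans h_right) A B

theorem abs_sin_sub_arg_le_norm_circleMap_sub (a : ℂ) (t : ℝ) :
    |sin (t - Complex.arg a)| ≤ ‖circleMap 0 1 t - a‖ := by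
  have h_rotate : circleMap 0 1 t - a = Complex.exp (Complex.arg a * Complex.I) *
      (Complex.exp ((t - Complex.arg a : ℝ) * Complex.I) - ‖a‖) := by
    conv_lhs => rw [← Complex.norm_mul_exp_arg_mul_I a]
    rw [mul_sub, ← Complex.exp_add, circleMap]
    push_cast
    ring_nf
  rw [h_rotate, norm_mul, Complex.norm_exp_ofReal_mul_I, one_mul]
  refine le_trans (le_of_eq ?_) (Complex.abs_im_le_norm _)
  rw [Complex.sub_im, Complex.exp_ofReal_mul_I_im, Complex.ofReal_im, sub_zero]

theorem ae_sin_sub_ne_zero (α : ℝ) : ∀ᵐ t : ℝ, sin (t - α) ≠ 0 := by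
  refine ((Set.countable_range fun n : ℤ => n * π + α).mono fun t ht => ?_).measure_zero _
  obtain ⟨n, hn⟩ := sin_eq_zero_iff.1 (not_not.1 ht)
  exact ⟨n, by simp only [hn, sub_add_cancel]⟩

theorem ae_inv_sqrt_norm_circleMap_sub_le (a : ℂ) :
    ∀ᵐ t : ℝ, (√‖circleMap 0 1 t - a‖)⁻¹ ≤ (√|sin (t - Complex.arg a)|)⁻¹ := by
  filter_upwards [ae_sin_sub_ne_zero (Complex.arg a)] with t ht
  exact inv_anti₀ (sqrt_pos.2 (abs_pos.2 ht))
    (sqrt_le_sqrt (abs_sin_sub_arg_le_norm_circleMap_sub a t))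

theorem intervalIntegrable_inv_sqrt_abs_sin_sub (α : ℝ) :
    IntervalIntegrable (fun t : ℝ => (√|sin (t - α)|)⁻¹) MeasureTheory.volume 0 (2 * π) := by
  simpa using (intervalIntegrable_inv_sqrt_abs_sin (0 - α) (2 * π - α)).comp_sub_right α

theorem circleIntegrable_inv_sqrt_norm_sub (a : ℂ) :
    CircleIntegrable (fun z => (√‖z - a‖)⁻¹) 0 1 := by
  have h_meas : Measurable fun t : ℝ => (√‖circleMap 0 1 t - a‖)⁻¹ := by
    have := (continuous_circleMap 0 1).measurable
    fun_prop
  refine (intervalIntegrable_inv_sqrt_abs_sin_sub (Complex.arg a)).mono_fun'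
    h_meas.aestronglyMeasurable ?_
  filter_upwards [MeasureTheory.ae_restrict_of_ae (ae_inv_sqrt_norm_circleMap_sub_le a)] with t ht
  rwa [norm_of_nonneg (by positivity)]

/-- The mean value of `|sin|^(-1/2)`, a bound for the mean value of `‖z - a‖^(-1/2)` over the unit
circle which is uniform in `a`. -/
noncomputable def meanInvSqrtSin : ℝ := (2 * π)⁻¹ * ∫ t in (0 : ℝ)..(2 * π), (√|sin t|)⁻¹

theorem meanInvSqrtSin_nonneg : 0 ≤ meanInvSqrtSin :=
  mul_nonneg (by positivity)
    (intervalIntegral.integral_nonneg (by positivity) fun t _ => by positivity)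

theorem circleAverage_inv_sqrt_norm_sub_le (a : ℂ) :
    circleAverage (fun z => (√‖z - a‖)⁻¹) 0 1 ≤ meanInvSqrtSin := by
  have h_shift : ∫ t in (0 : ℝ)..(2 * π), (√|sin (t - Complex.arg a)|)⁻¹ =
      ∫ t in (0 : ℝ)..(2 * π), (√|sin t|)⁻¹ := by
    have h_periodic : Function.Periodic (fun t : ℝ => (√|sin t|)⁻¹) (2 * π) := by
      intro t
      simp
    rw [intervalIntegral.integral_comp_sub_right (fun t => (√|sin t|)⁻¹), zero_sub,
      sub_eq_neg_add, h_periodic.intervalIntegral_add_eq _ 0, zero_add]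
  rw [circleAverage_def, meanInvSqrtSin, smul_eq_mul, ← h_shift]
  gcongr
  exact intervalIntegral.integral_mono_ae (by positivity) (circleIntegrable_inv_sqrt_norm_sub a)
    (intervalIntegrable_inv_sqrt_abs_sin_sub _) (ae_inv_sqrt_norm_circleMap_sub_le a)

theorem circleAverage_abs_log_norm_sub_le (hρ1 : 1 ≤ ρ) (hρ2 : ρ ≤ 2) (ha : ‖a‖ ≤ ρ) :
    circleAverage (fun z => |log ‖z - a‖|) 0 ρ ≤ 4 := by
  have h_int := circleIntegrable_log_norm_sub_const (a := a) (c := 0) ρ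
  have h_avg := circleAverage_log_norm_sub_const_of_mem_closedBall (a := a) (c := 0) (R := ρ)
    (by simpa using ha.trans (le_abs_self _))
  have h_pointwise : ∀ z ∈ sphere 0 |ρ|, |log ‖z - a‖| ≤ 2 * log 4 - log ‖z - a‖ := by
    intro z hz
    have hz' : ‖z‖ = ρ := by simpa [abs_of_nonneg (zero_le_one.trans hρ1)] using hz
    have h_log4 : 0 ≤ log 4 := log_nonneg (by norm_num)
    rcases (norm_nonneg (z - a)).eq_or_lt with h_zero | h_pos
    · rw [← h_zero, log_zero, abs_zero]
      linarith
    · have := log_le_log h_pos (show ‖z - a‖ ≤ 4 by linarith [norm_sub_le z a])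
      exact abs_le.2 ⟨by linarith, by linarith⟩
  have h_mono := circleAverage_mono h_int.abs ((circleIntegrable_const _ _ _).sub h_int)
    h_pointwise
  have h_sub : circleAverage ((fun _ => 2 * log 4) - fun z => log ‖z - a‖) 0 ρ =
      2 * log 4 - log ρ := by
    rw [circleAverage_sub (circleIntegrable_const _ _ _) h_int, circleAverage_const, h_avg]
  have h_log4 : log 4 = 2 * log 2 := by
    rw [show (4 : ℝ) = 2 ^ 2 by norm_num, log_pow, Nat.cast_two]
  refine (h_mono.trans_eq h_sub).trans ?_
  linarith [log_two_lt_d9, log_nonneg hρ1]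

theorem abs_poissonKernel_sub_le (hρ1 : 1 < ρ) (hρ2 : ρ ≤ 2) (hz : ‖z‖ = 1)
    (hw : ‖w‖ ≤ (1 + ρ) / 2) (hx : ‖x‖ = ρ) :
    |poissonKernel 0 w x - poissonKernel 0 z x| ≤ 8 / (ρ - 1) ^ 2 * ‖w - z‖ := by
  have hρ0 : 0 < ρ - 1 := by linarith
  have hxw : (ρ - 1) / 2 ≤ ‖x - w‖ := by linarith [norm_sub_norm_le x w]
  have hxz : ρ - 1 ≤ ‖x - z‖ := by linarith [norm_sub_norm_le x z]
  have hxw0 : x - w ≠ 0 := norm_pos_iff.1 (by linarith)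
  have hxz0 : x - z ≠ 0 := norm_pos_iff.1 (by linarith)
  have h_herglotz : herglotzRieszKernel 0 w x - herglotzRieszKernel 0 z x =
      2 * x * (w - z) / ((x - w) * (x - z)) := by
    simp only [herglotzRieszKernel_def, sub_zero]
    field_simp
    ring
  rw [poissonKernel_eq_re_herglotzRieszKernel, poissonKernel_eq_re_herglotzRieszKernel]
  simp only [Function.comp_apply]
  rw [← Complex.sub_re]
  calc |(herglotzRieszKernel 0 w x - herglotzRieszKernel 0 z x).re|
      ≤ ‖herglotzRieszKernel 0 w x - herglotzRieszKernel 0 z x‖ := Complex.abs_re_le_norm _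
    _ = 2 * ρ * ‖w - z‖ / (‖x - w‖ * ‖x - z‖) := by
        rw [h_herglotz, norm_div, norm_mul, norm_mul, norm_mul, hx, Complex.norm_ofNat]
    _ ≤ 2 * 2 * ‖w - z‖ / ((ρ - 1) / 2 * (ρ - 1)) := by gcongr
    _ = 8 / (ρ - 1) ^ 2 * ‖w - z‖ := by
        field_simp
        ring

theorem abs_sub_le_of_harmonicOnNhd (hρ1 : 1 < ρ) (hρ2 : ρ ≤ 2)
    (hu : InnerProductSpace.HarmonicOnNhd u (closedBall 0 ρ))
    (hz : ‖z‖ = 1) (hw : ‖w‖ ≤ (1 + ρ) / 2) :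
    |u w - u z| ≤ 8 / (ρ - 1) ^ 2 * ‖w - z‖ * circleAverage (fun x => |u x|) 0 ρ := by
  have hρ' : |ρ| = ρ := abs_of_pos (by linarith)
  have hzb : z ∈ ball (0 : ℂ) ρ := by simp [hz, hρ1]
  have hwb : w ∈ ball (0 : ℂ) ρ := by
    rw [mem_ball_zero_iff]
    linarith
  have hu_cont : ContinuousOn u (sphere 0 |ρ|) := fun x hx =>
    (hu x (sphere_subset_closedBall (hρ' ▸ hx))).1.continuousAt.continuousWithinAt
  have h_int : ∀ v ∈ ball (0 : ℂ) ρ, CircleIntegrable (poissonKernel 0 v • u) 0 ρ := by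
    refine fun v hv => (ContinuousOn.smul ?_ hu_cont).circleIntegrable'
    rw [poissonKernel_eq_re_herglotzRieszKernel]
    exact Complex.continuous_re.comp_continuousOn (continuousOn_herglotzRieszKernel_sphere hv)
  rw [← hu.circleAverage_poissonKernel_smul hzb, ← hu.circleAverage_poissonKernel_smul hwb,
    ← circleAverage_sub (h_int w hwb) (h_int z hzb), ← smul_eq_mul, ← circleAverage_fun_smul]
  refine abs_circleAverage_le_circleAverage_abs.trans ?_
  refine circleAverage_mono ((h_int w hwb).sub (h_int z hzb)).abs
    (hu_cont.circleIntegrable'.abs.const_smul) fun x hx => ?_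
  have h_eq : |poissonKernel 0 w • u - poissonKernel 0 z • u| x =
      |poissonKernel 0 w x - poissonKernel 0 z x| * |u x| := by
    rw [← abs_mul, sub_mul]
    rfl
  rw [h_eq, smul_eq_mul]
  exact mul_le_mul_of_nonneg_right
    (abs_poissonKernel_sub_le hρ1 hρ2 hz hw (by simpa [hρ'] using hx)) (abs_nonneg _)

end CircleEstimates

/-! ### Wronskians -/

section Determinant

variable {𝕜 : Type*} [NontriviallyNormedField 𝕜] {κ : Type*} [Fintype κ] [DecidableEq κ]
  {A : 𝕜 → Matrix κ κ 𝕜} {w : 𝕜}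

theorem analyticAt_det (hA : ∀ i j, AnalyticAt 𝕜 (fun z => A z i j) w) :
    AnalyticAt 𝕜 (fun z => (A z).det) w := by
  simp only [Matrix.det_apply']
  exact Finset.analyticAt_fun_sum _ fun σ _ =>
    analyticAt_const.mul (Finset.analyticAt_fun_prod _ fun i _ => hA _ _)

theorem sum_le_analyticOrderAt_det (hA : ∀ i j, AnalyticAt 𝕜 (fun z => A z i j) w) {k : κ → ℕ}
    (hk : ∀ i j, (k i : ℕ∞) ≤ analyticOrderAt (fun z => A z i j) w) :
    ((∑ i, k i : ℕ) : ℕ∞) ≤ analyticOrderAt (fun z => (A z).det) w := by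
  have hfactor i j := (natCast_le_analyticOrderAt (hA i j)).1 (hk i j)
  choose g hg hAg using hfactor
  refine (natCast_le_analyticOrderAt (analyticAt_det hA)).2
    ⟨fun z => (Matrix.of fun i j => g i j z).det, analyticAt_det hg, ?_⟩
  filter_upwards [Filter.eventually_all.2 fun i => Filter.eventually_all.2 (hAg i)] with z hz
  rw [smul_eq_mul, ← Finset.prod_pow_eq_pow_sum, ← Matrix.det_mul_column]
  congr 1
  ext i j
  exact hz i j

end Determinant

section Wronskian

variable {𝕜 : Type*} [NontriviallyNormedField 𝕜] {d : ℕ} {F : Fin d → 𝕜 → 𝕜} {z : 𝕜}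

/-- The Wronskian determinant of the functions `F i`, whose `i`-th row holds the derivatives of
`F i` of orders `0, …, d - 1`. -/
noncomputable def wronskian (F : Fin d → 𝕜 → 𝕜) (z : 𝕜) : 𝕜 :=
  (Matrix.of fun i l : Fin d => iteratedDeriv l (F i) z).det

theorem wronskian_congr {G : Fin d → 𝕜 → 𝕜} (h : ∀ i, F i =ᶠ[nhds z] G i) :
    wronskian F z = wronskian G z := by
  unfold wronskian
  congr 1
  ext i l
  exact (h i).iteratedDeriv_eq l

theorem wronskian_linearCombination (hF : ∀ i, ContDiffAt 𝕜 d (F i) z)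
    (B : Matrix (Fin d) (Fin d) 𝕜) :
    wronskian (fun i w => ∑ l, B i l * F l w) z = B.det * wronskian F z := by
  unfold wronskian
  rw [← Matrix.det_mul]
  congr 1
  ext i l
  simp only [Matrix.of_apply, Matrix.mul_apply]
  rw [iteratedDeriv_fun_sum fun j _ =>
    contDiffAt_const.mul ((hF j).of_le (by exact_mod_cast l.is_lt.le))]
  exact Finset.sum_congr rfl fun j _ => iteratedDeriv_const_mul_field _ _

/-- The Leibniz rule expresses the derivatives of `u * F i` through those of `F i` by this upper
triangular matrix. -/
noncomputable def leibnizMatrix (d : ℕ) (u : 𝕜 → 𝕜) (z : 𝕜) : Matrix (Fin d) (Fin d) 𝕜 :=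
  Matrix.of fun i l => ((l : ℕ).choose i : 𝕜) * iteratedDeriv (l - i : ℕ) u z

theorem det_leibnizMatrix (d : ℕ) (u : 𝕜 → 𝕜) (z : 𝕜) :
    (leibnizMatrix d u z).det = u z ^ d := by
  rw [Matrix.det_of_isUpperTriangular]
  · simp [leibnizMatrix]
  · intro i j hij
    have hij' : (j : ℕ) < i := hij
    simp [leibnizMatrix, Nat.choose_eq_zero_of_lt hij']

theorem wronskian_mul {u : 𝕜 → 𝕜} (hF : ∀ i, ContDiffAt 𝕜 d (F i) z)
    (hu : ContDiffAt 𝕜 d u z) :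
    wronskian (fun i w => F i w * u w) z = u z ^ d * wronskian F z := by
  unfold wronskian
  rw [← det_leibnizMatrix, mul_comm, ← Matrix.det_mul]
  congr 1
  ext i l
  have hl : ((l : ℕ) : WithTop ℕ∞) ≤ d := by exact_mod_cast l.is_lt.le
  simp only [Matrix.of_apply, Matrix.mul_apply, leibnizMatrix]
  rw [iteratedDeriv_fun_mul ((hF i).of_le hl) (hu.of_le hl),
    Fin.sum_univ_eq_sum_range (fun j => iteratedDeriv j (F i) z *
      (((l : ℕ).choose j : 𝕜) * iteratedDeriv (l - j : ℕ) u z)) d]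
  refine (Finset.sum_subset (Finset.range_subset_range.2 l.is_lt) fun j _ hj => ?_).trans
    (Finset.sum_congr rfl fun j _ => by ring)
  have hlj : (l : ℕ) < j := by simpa using hj
  simp [Nat.choose_eq_zero_of_lt hlj]

theorem wronskian_eq_pow_mul_wronskian_div {u : 𝕜 → 𝕜} (hF : ∀ i, ContDiffAt 𝕜 d (F i) z)
    (hu : ContDiffAt 𝕜 d u z) (hz : u z ≠ 0) :
    wronskian F z = u z ^ d * wronskian (fun i w => F i w / u w) z := by
  have hdiv i : ContDiffAt 𝕜 d (fun w => F i w / u w) z := (hF i).div hu hz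
  rw [← wronskian_mul hdiv hu]
  refine wronskian_congr fun i => ?_
  filter_upwards [hu.continuousAt.eventually_ne hz] with w hw
  exact (div_mul_cancel₀ _ hw).symm

theorem wronskian_comp_const_mul (hF : ∀ i, ContDiff 𝕜 d (F i)) (r z : 𝕜) :
    wronskian (fun i w => F i (r * w)) z = r ^ (∑ l : Fin d, (l : ℕ)) * wronskian F (r * z) := by
  unfold wronskian
  rw [← Finset.prod_pow_eq_pow_sum, ← Matrix.det_mul_row]
  congr 1
  ext i l
  simp only [Matrix.of_apply]
  rw [iteratedDeriv_comp_const_smul ((hF i).of_le (by exact_mod_cast l.is_lt.le))]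
  simp only [smul_eq_mul]

theorem norm_wronskian_le {x : ℝ}
    (h : ∀ i, ∀ l < d, ‖iteratedDeriv l (F i) z‖ ≤ x * ‖F i z‖) :
    ‖wronskian F z‖ ≤ (d.factorial : ℝ) * x ^ d * ∏ i, ‖F i z‖ := by
  unfold wronskian
  rw [Matrix.det_apply']
  have hterm (σ : Equiv.Perm (Fin d)) : ‖((Equiv.Perm.sign σ : ℤ) : 𝕜) *
      ∏ l : Fin d, iteratedDeriv (l : ℕ) (F (σ l)) z‖ ≤ x ^ d * ∏ i, ‖F i z‖ := by
    have hsign : ‖((Equiv.Perm.sign σ : ℤ) : 𝕜)‖ = 1 := by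
      rcases Int.units_eq_one_or (Equiv.Perm.sign σ) with h | h <;> simp [h]
    rw [norm_mul, norm_prod, hsign, one_mul]
    calc ∏ l : Fin d, ‖iteratedDeriv (l : ℕ) (F (σ l)) z‖
        ≤ ∏ l : Fin d, (x * ‖F (σ l) z‖) :=
          Finset.prod_le_prod (fun _ _ => norm_nonneg _) fun l _ => h _ _ l.is_lt
      _ = x ^ d * ∏ i, ‖F i z‖ := by
          rw [Finset.prod_mul_distrib, Equiv.prod_comp σ fun i => ‖F i z‖]
          simp
  refine (norm_sum_le_of_le _ fun σ _ => hterm σ).trans_eq ?_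
  simp [Fintype.card_perm, mul_assoc]

end Wronskian

section AnalyticWronskian

variable {𝕜 : Type*} [NontriviallyNormedField 𝕜] [CompleteSpace 𝕜] {d : ℕ} {F : Fin d → 𝕜 → 𝕜}
  {w : 𝕜}

theorem analyticAt_iteratedDeriv {f : 𝕜 → 𝕜} (hf : AnalyticAt 𝕜 f w) (l : ℕ) :
    AnalyticAt 𝕜 (iteratedDeriv l f) w := by
  rw [iteratedDeriv_eq_iterate]
  exact hf.iterated_deriv l

theorem le_analyticOrderAt_iteratedDeriv [CharZero 𝕜] {f : 𝕜 → 𝕜} (hf : AnalyticAt 𝕜 f w)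
    {n k l : ℕ} (hn : (n : ℕ∞) ≤ analyticOrderAt f w) (hk : k + l ≤ n) :
    (k : ℕ∞) ≤ analyticOrderAt (iteratedDeriv l f) w := by
  refine (natCast_le_analyticOrderAt_iff_iteratedDeriv_eq_zero
    (analyticAt_iteratedDeriv hf l)).2 fun j hj => ?_
  have h := (natCast_le_analyticOrderAt_iff_iteratedDeriv_eq_zero hf).1 hn (j + l) (by omega)
  rwa [iteratedDeriv_eq_iterate, Function.iterate_add_apply, ← iteratedDeriv_eq_iterate,
    ← iteratedDeriv_eq_iterate] at h

theorem analyticAt_wronskian (hF : ∀ i, AnalyticAt 𝕜 (F i) w) : AnalyticAt 𝕜 (wronskian F) w :=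
  analyticAt_det fun i _ => analyticAt_iteratedDeriv (hF i) _

theorem sum_le_analyticOrderAt_wronskian [CharZero 𝕜] (hF : ∀ i, AnalyticAt 𝕜 (F i) w)
    {n : Fin d → ℕ} (hn : ∀ i, (n i : ℕ∞) ≤ analyticOrderAt (F i) w) :
    ((∑ i, (n i - (d - 1)) : ℕ) : ℕ∞) ≤ analyticOrderAt (wronskian F) w := by
  refine sum_le_analyticOrderAt_det (fun i _ => analyticAt_iteratedDeriv (hF i) _) fun i l => ?_
  rcases le_total (n i) (d - 1) with h | h
  · simp [Nat.sub_eq_zero_of_le h]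
  · exact le_analyticOrderAt_iteratedDeriv (hF i) (hn i) (by omega)

end AnalyticWronskian

section WronskianVanishing

variable {d : ℕ}

theorem wronskian_eq_wronskian_deriv {φ : Fin (d + 1) → ℂ → ℂ} {z : ℂ}
    (h : φ 0 =ᶠ[nhds z] fun _ => 1) :
    wronskian φ z = wronskian (fun i : Fin d => deriv (φ i.succ)) z := by
  unfold wronskian
  rw [Matrix.det_succ_row_zero, Fin.sum_univ_succ, Finset.sum_eq_zero, add_zero]
  · have h1 : φ 0 z = 1 := h.eq_of_nhds
    simp [h1, iteratedDeriv_succ', Matrix.submatrix]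
  · intro l _
    simp [h.iteratedDeriv_eq, iteratedDeriv_const]

theorem eventually_eq_of_eventually_deriv_eq_zero {f : ℂ → ℂ} {c : ℂ}
    (hf : ∀ᶠ z in nhds c, DifferentiableAt ℂ f z) (h : ∀ᶠ z in nhds c, deriv f z = 0) :
    ∀ᶠ z in nhds c, f z = f c := by
  obtain ⟨ε, hε, hball⟩ := Metric.eventually_nhds_iff_ball.1 (hf.and h)
  filter_upwards [Metric.ball_mem_nhds c hε] with z hz
  exact Metric.isOpen_ball.is_const_of_deriv_eq_zero (convex_ball c ε).isPreconnected
    (fun x hx => (hball x hx).1.differentiableWithinAt) (fun x hx => (hball x hx).2)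
    hz (Metric.mem_ball_self hε)

theorem eventually_linearCombination_eq_of_deriv_eq_zero {κ : Type*} [Fintype κ]
    {φ : κ → ℂ → ℂ} {v : κ → ℂ} {c : ℂ} (hφ : ∀ i, AnalyticAt ℂ (φ i) c)
    (h : ∀ᶠ z in nhds c, ∑ i, v i * deriv (φ i) z = 0) :
    ∀ᶠ z in nhds c, ∑ i, v i * φ i z = ∑ i, v i * φ i c := by
  have hderiv : ∀ᶠ z in nhds c,
      HasDerivAt (fun z => ∑ i, v i * φ i z) (∑ i, v i * deriv (φ i) z) z := by
    have hanalytic : ∀ᶠ z in nhds c, ∀ i, AnalyticAt ℂ (φ i) z :=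
      Filter.eventually_all.2 fun i => (hφ i).eventually_analyticAt
    filter_upwards [hanalytic] with z hz
    exact HasDerivAt.fun_sum fun i _ => (hz i).differentiableAt.hasDerivAt.const_mul (v i)
  exact eventually_eq_of_eventually_deriv_eq_zero (hderiv.mono fun z hz => hz.differentiableAt)
    ((hderiv.and h).mono fun z hz => hz.1.deriv.trans hz.2)

theorem exists_linearCombination_eventually_eq_zero {F : Fin d → ℂ → ℂ} {U : Set ℂ}
    (hU : IsOpen U) (hne : U.Nonempty) (hF : ∀ i, AnalyticOnNhd ℂ (F i) U)
    (hW : ∀ z ∈ U, wronskian F z = 0) :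
    ∃ v : Fin d → ℂ, v ≠ 0 ∧ ∃ c ∈ U, ∀ᶠ z in nhds c, ∑ i, v i * F i z = 0 := by
  induction d generalizing U with
  | zero =>
    obtain ⟨c, hc⟩ := hne
    simpa [wronskian] using hW c hc
  | succ d ih =>
    by_cases hzero : ∀ z ∈ U, F 0 z = 0
    · obtain ⟨c, hc⟩ := hne
      refine ⟨Pi.single 0 1, by simp, c, hc, ?_⟩
      filter_upwards [hU.mem_nhds hc] with z hz
      simp [Pi.single_apply, hzero z hz]
    push Not at hzero
    obtain ⟨c₀, hc₀, hFc₀⟩ := hzero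
    let φ : Fin (d + 1) → ℂ → ℂ := fun i z => F i z / F 0 z
    let U' := U ∩ {z | F 0 z ≠ 0}
    have hU' : IsOpen U' := (hF 0).continuousOn.isOpen_inter_preimage hU isOpen_ne
    have hφ i : AnalyticOnNhd ℂ (φ i) U' := fun z hz => (hF i z hz.1).div (hF 0 z hz.1) hz.2
    have hWφ : ∀ z ∈ U', wronskian (fun i : Fin d => deriv (φ i.succ)) z = 0 := by
      intro z hz
      have hdiv := wronskian_eq_pow_mul_wronskian_div
        (fun i => (hF i z hz.1).contDiffAt) (hF 0 z hz.1).contDiffAt hz.2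
      have hφ0 : φ 0 =ᶠ[nhds z] fun _ => 1 := by
        filter_upwards [hU'.mem_nhds hz] with x hx using div_self hx.2
      rw [hW z hz.1, zero_eq_mul, or_iff_right (pow_ne_zero _ hz.2)] at hdiv
      rwa [← wronskian_eq_wronskian_deriv hφ0]
    obtain ⟨v, hv, c, hc, hsum⟩ := ih hU' ⟨c₀, hc₀, hFc₀⟩ (fun i => (hφ i.succ).deriv) hWφ
    have hφc (i : Fin d) : AnalyticAt ℂ (φ i.succ) c := hφ i.succ c hc
    have hconst : ∀ᶠ z in nhds c, ∑ i, v i * φ i.succ z = ∑ i, v i * φ i.succ c :=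
      eventually_linearCombination_eq_of_deriv_eq_zero hφc hsum
    refine ⟨Fin.cons (-∑ i, v i * φ i.succ c) v, fun h => hv ?_, c, hc.1, ?_⟩
    · ext i
      simpa using congrFun h i.succ
    · filter_upwards [hU'.mem_nhds hc, hconst] with z hz hz0
      have hF0 : F 0 z ≠ 0 := hz.2
      rw [Fin.sum_univ_succ, Fin.cons_zero, ← hz0, neg_mul, Finset.sum_mul, neg_add_eq_zero]
      refine Finset.sum_congr rfl fun i _ => ?_
      simp only [φ, Fin.cons_succ]
      field_simp

theorem exists_wronskian_ne_zero {F : Fin d → ℂ → ℂ} (hF : ∀ i, Differentiable ℂ (F i))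
    (hli : LinearIndependent ℂ F) : ∃ z, wronskian F z ≠ 0 := by
  by_contra! hW
  obtain ⟨v, hv, c, -, hc⟩ := exists_linearCombination_eventually_eq_zero isOpen_univ
    Set.univ_nonempty (fun i z _ => (hF i).analyticAt z) fun z _ => hW z
  have hdiff : Differentiable ℂ (∑ i, v i • F i) :=
    Differentiable.sum fun i _ => (hF i).const_smul (v i)
  have hsum : ∑ i, v i • F i = 0 :=
    AnalyticOnNhd.eq_of_eventuallyEq (fun z _ => hdiff.analyticAt z)
      (fun _ _ => analyticAt_const) (z₀ := c) (hc.mono fun z hz => by simpa using hz)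
  exact hv (funext (Fintype.linearIndependent_iff.1 hli v hsum))

end WronskianVanishing

/-! ### The logarithmic derivative lemma for Wronskians -/

section LogDerivative

open Real Metric

variable {ρ t M C x y c : ℝ} {z w : ℂ}

theorem abs_log_norm_sub_log_norm_le {E : Type*} [NormedAddCommGroup E] {z w : E}
    (hw : ‖w - z‖ ≤ ‖z‖ / 2) : |log ‖w‖ - log ‖z‖| ≤ 2 * (‖w - z‖ * ‖z‖⁻¹) := by
  rcases eq_or_ne z 0 with rfl | hz
  · obtain rfl : w = 0 := by simpa using hw
    simp
  have hz' : 0 < ‖z‖ := norm_pos_iff.2 hz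
  have hdiff := abs_le.1 (abs_norm_sub_norm_le w z)
  have hw' : 0 < ‖w‖ := by linarith
  rw [← log_div hw'.ne' hz'.ne', ← div_eq_mul_inv, ← mul_div_assoc, abs_le]
  constructor
  · have hinv : ‖z‖ / ‖w‖ - 1 ≤ 2 * ‖w - z‖ / ‖z‖ := by
      rw [div_sub_one hw'.ne', div_le_div_iff₀ hw' hz']
      nlinarith [norm_nonneg (w - z)]
    have hlog := one_sub_inv_le_log_of_pos (div_pos hw' hz')
    rw [inv_div] at hlog
    linarith
  · refine (log_le_sub_one_of_pos (div_pos hw' hz')).trans ?_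
    rw [div_sub_one hz'.ne']
    gcongr
    linarith [norm_nonneg (w - z)]

section ZeroShift

variable {κ : Type*} [Fintype κ] {a : κ → ℂ}

theorem norm_sub_le_of_mul_sum_inv_le (hz : ∀ i, z - a i ≠ 0)
    (hw : 4 * (‖w - z‖ * ∑ i, ‖z - a i‖⁻¹) ≤ 1) (i : κ) : ‖w - z‖ ≤ ‖z - a i‖ / 4 := by
  have hi : ‖z - a i‖⁻¹ ≤ ∑ i, ‖z - a i‖⁻¹ :=
    Finset.single_le_sum (f := fun i => ‖z - a i‖⁻¹) (fun _ _ => by positivity)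
      (Finset.mem_univ i)
  have hmul : ‖w - z‖ * ‖z - a i‖⁻¹ ≤ 1 / 4 := by
    linarith [mul_le_mul_of_nonneg_left hi (norm_nonneg (w - z))]
  rw [← div_eq_mul_inv, div_le_iff₀ (norm_pos_iff.2 (hz i))] at hmul
  linarith

theorem abs_sum_log_norm_sub_le (hz : ∀ i, z - a i ≠ 0)
    (hw : 4 * (‖w - z‖ * ∑ i, ‖z - a i‖⁻¹) ≤ 1) :
    |∑ i, log ‖w - a i‖ - ∑ i, log ‖z - a i‖| ≤ 1 / 2 := by
  have hterm i : |log ‖w - a i‖ - log ‖z - a i‖| ≤ 2 * (‖w - z‖ * ‖z - a i‖⁻¹) := by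
    have h := abs_log_norm_sub_log_norm_le (z := z - a i) (w := w - a i)
    rw [sub_sub_sub_cancel_right] at h
    exact h (by linarith [norm_sub_le_of_mul_sum_inv_le hz hw i, norm_nonneg (z - a i)])
  calc |∑ i, log ‖w - a i‖ - ∑ i, log ‖z - a i‖|
      = |∑ i, (log ‖w - a i‖ - log ‖z - a i‖)| := by rw [Finset.sum_sub_distrib]
    _ ≤ ∑ i, 2 * (‖w - z‖ * ‖z - a i‖⁻¹) :=
        (Finset.abs_sum_le_sum_abs _ _).trans (Finset.sum_le_sum fun i _ => hterm i)
    _ = 2 * (‖w - z‖ * ∑ i, ‖z - a i‖⁻¹) := by rw [← Finset.mul_sum, ← Finset.mul_sum]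
    _ ≤ 1 / 2 := by linarith

end ZeroShift

namespace IsZeroFactorization

variable {n n₁ n₂ : ℕ} {a : Fin n → ℂ} {a₁ : Fin n₁ → ℂ} {a₂ : Fin n₂ → ℂ}
  {g h g₁ g₂ h₁ h₂ : ℂ → ℂ}

theorem card_le (hf : IsZeroFactorization ρ a g h) (hg : Differentiable ℂ g) (h0 : g 0 ≠ 0)
    (hρ1 : 1 < ρ) (hρ2 : ρ ≤ 2)
    (hM : circleAverage (fun z => log ‖g z‖) 0 (ρ ^ 2) - log ‖g 0‖ ≤ M) :
    n ≤ 2 * (M / (ρ - 1)) := by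
  have hρ : 0 < ρ - 1 := by linarith
  have hcard := (hf.card_mul_log_le hg h0 (by linarith) (by nlinarith : ρ ≤ ρ ^ 2)).trans hM
  have hlog : (ρ - 1) / 2 ≤ log ρ := by
    refine le_trans ?_ (one_sub_inv_le_log_of_pos (by linarith : 0 < ρ))
    rw [← sub_nonneg]
    have hid : 1 - ρ⁻¹ - (ρ - 1) / 2 = (ρ - 1) * (2 - ρ) / (2 * ρ) := by
      field_simp
    rw [hid]
    exact div_nonneg (mul_nonneg hρ.le (by linarith)) (by linarith)
  rw [log_pow, Nat.cast_two, two_mul, add_sub_cancel_right] at hcard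
  rw [← mul_div_assoc, le_div_iff₀ hρ]
  nlinarith [Nat.cast_nonneg (α := ℝ) n]

theorem circleAverage_abs_log_norm_sub_cofactor_le (hf : IsZeroFactorization ρ a g h)
    (hg : Differentiable ℂ g) (h0 : g 0 ≠ 0) (hρ1 : 1 < ρ) (hρ2 : ρ ≤ 2) :
    circleAverage (fun z => |log ‖g z‖ - log ‖h z‖|) 0 ρ ≤ 4 * n := by
  have hci i : CircleIntegrable (fun z => |log ‖z - a i‖|) 0 ρ :=
    (circleIntegrable_log_norm_sub_const _).abs
  calc circleAverage (fun z => |log ‖g z‖ - log ‖h z‖|) 0 ρ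
      ≤ circleAverage (fun z => ∑ i, |log ‖z - a i‖|) 0 ρ := by
        refine circleAverage_mono_of_codiscreteWithin (by linarith)
          ((circleIntegrable_log_norm hg ρ).sub
            (circleIntegrable_log_norm hf.differentiable ρ)).abs
          (CircleIntegrable.fun_sum _ fun i _ => hci i) ?_
        filter_upwards [eventually_codiscreteWithin_ne_zero hg h0 _] with z hz _
        rw [hf.log_norm_eq hz, add_sub_cancel_right]
        exact Finset.abs_sum_le_sum_abs _ _
    _ = ∑ i, circleAverage (fun z => |log ‖z - a i‖|) 0 ρ :=
        circleAverage_fun_sum fun i _ => hci i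
    _ ≤ ∑ _i : Fin n, (4 : ℝ) := Finset.sum_le_sum fun i _ =>
        circleAverage_abs_log_norm_sub_le hρ1.le hρ2 (hf.norm_le i)
    _ = 4 * n := by simp [mul_comm]

theorem circleAverage_abs_log_norm_cofactor_sub_cofactor_le (hf₁ : IsZeroFactorization ρ a₁ g₁ h₁)
    (hf₂ : IsZeroFactorization ρ a₂ g₂ h₂) (hg₁ : Differentiable ℂ g₁)
    (hg₂ : Differentiable ℂ g₂) (h0₁ : g₁ 0 ≠ 0) (h0₂ : g₂ 0 ≠ 0) (hρ1 : 1 < ρ) (hρ2 : ρ ≤ 2) :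
    circleAverage (fun z => |log ‖h₁ z‖ - log ‖h₂ z‖|) 0 ρ ≤
      circleAverage (fun z => |log ‖g₁ z‖ - log ‖g₂ z‖|) 0 ρ + 4 * (n₁ + n₂) := by
  have hci {u v : ℂ → ℂ} (hu : Differentiable ℂ u) (hv : Differentiable ℂ v) :
      CircleIntegrable (fun z => |log ‖u z‖ - log ‖v z‖|) 0 ρ :=
    ((circleIntegrable_log_norm hu ρ).sub (circleIntegrable_log_norm hv ρ)).abs
  have hci₁ := hci hg₁ hf₁.differentiable
  have hci₂ := hci hg₂ hf₂.differentiable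
  have hci₁₂ : CircleIntegrable (fun z => |log ‖g₁ z‖ - log ‖h₁ z‖| +
      |log ‖g₂ z‖ - log ‖h₂ z‖|) 0 ρ := hci₁.add hci₂
  have htri : circleAverage (fun z => |log ‖h₁ z‖ - log ‖h₂ z‖|) 0 ρ ≤
      circleAverage (fun z => |log ‖g₁ z‖ - log ‖g₂ z‖| +
        (|log ‖g₁ z‖ - log ‖h₁ z‖| + |log ‖g₂ z‖ - log ‖h₂ z‖|)) 0 ρ := by
    refine circleAverage_mono (hci hf₁.differentiable hf₂.differentiable)
      ((hci hg₁ hg₂).add hci₁₂) fun z _ => ?_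
    have h₁₂ := abs_sub_le (log ‖h₁ z‖) (log ‖g₁ z‖) (log ‖h₂ z‖)
    have h₂₂ := abs_sub_le (log ‖g₁ z‖) (log ‖g₂ z‖) (log ‖h₂ z‖)
    rw [abs_sub_comm (log ‖h₁ z‖) (log ‖g₁ z‖)] at h₁₂
    linarith
  rw [circleAverage_fun_add (hci hg₁ hg₂) hci₁₂,
    circleAverage_fun_add hci₁ hci₂] at htri
  linarith [hf₁.circleAverage_abs_log_norm_sub_cofactor_le hg₁ h0₁ hρ1 hρ2,
    hf₂.circleAverage_abs_log_norm_sub_cofactor_le hg₂ h0₂ hρ1 hρ2]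

theorem ne_zero_of_mul_sum_inv_le (hf : IsZeroFactorization ρ a g h) (hz : g z ≠ 0)
    (hw : 4 * (‖w - z‖ * ∑ i, ‖z - a i‖⁻¹) ≤ 1) (hh : h w ≠ 0) : g w ≠ 0 := by
  rw [hf.eq_prod_mul]
  refine mul_ne_zero (Finset.prod_ne_zero_iff.2 fun i _ hi => ?_) hh
  have hnorm := norm_sub_le_of_mul_sum_inv_le (hf.sub_ne_zero hz) hw i
  rw [sub_eq_zero.1 hi, norm_sub_rev] at hnorm
  linarith [norm_pos_iff.2 (hf.sub_ne_zero hz i)]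

theorem norm_div_le (hf₁ : IsZeroFactorization ρ a₁ g₁ h₁)
    (hf₂ : IsZeroFactorization ρ a₂ g₂ h₂) (hg₁ : Differentiable ℂ g₁)
    (hg₂ : Differentiable ℂ g₂) (h0₁ : g₁ 0 ≠ 0) (h0₂ : g₂ 0 ≠ 0)
    (hh₁ : ∀ z, ‖z‖ ≤ ρ → h₁ z ≠ 0) (hh₂ : ∀ z, ‖z‖ ≤ ρ → h₂ z ≠ 0)
    (hρ1 : 1 < ρ) (hρ2 : ρ ≤ 2) (hz : ‖z‖ = 1) (hz₁ : g₁ z ≠ 0) (hz₂ : g₂ z ≠ 0)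
    (hw : 2 * ‖w - z‖ ≤ ρ - 1) (hw₁ : 4 * (‖w - z‖ * ∑ i, ‖z - a₁ i‖⁻¹) ≤ 1)
    (hw₂ : 4 * (‖w - z‖ * ∑ i, ‖z - a₂ i‖⁻¹) ≤ 1)
    (hM : 8 / (ρ - 1) ^ 2 * ‖w - z‖ *
      (circleAverage (fun z => |log ‖g₁ z‖ - log ‖g₂ z‖|) 0 ρ + 4 * (n₁ + n₂)) ≤ 1) :
    g₂ w ≠ 0 ∧ ‖g₁ w / g₂ w‖ ≤ exp 2 * ‖g₁ z / g₂ z‖ := by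
  have hw' : ‖w‖ ≤ (1 + ρ) / 2 := by linarith [norm_sub_norm_le w z]
  have hne₁ := hf₁.ne_zero_of_mul_sum_inv_le hz₁ hw₁ (hh₁ w (by linarith))
  have hne₂ := hf₂.ne_zero_of_mul_sum_inv_le hz₂ hw₂ (hh₂ w (by linarith))
  have hharm : InnerProductSpace.HarmonicOnNhd (fun z => log ‖h₁ z‖ - log ‖h₂ z‖)
      (closedBall 0 ρ) := fun x hx => by
    have hx' := mem_closedBall_zero_iff.1 hx
    exact ((hf₁.differentiable.analyticAt x).harmonicAt_log_norm (hh₁ x hx')).sub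
      ((hf₂.differentiable.analyticAt x).harmonicAt_log_norm (hh₂ x hx'))
  have hcofactor := (abs_sub_le_of_harmonicOnNhd hρ1 hρ2 hharm hz hw').trans
    ((mul_le_mul_of_nonneg_left (hf₁.circleAverage_abs_log_norm_cofactor_sub_cofactor_le hf₂ hg₁ hg₂
      h0₁ h0₂ hρ1 hρ2) (by positivity)).trans hM)
  have hzeros₁ := abs_sum_log_norm_sub_le (hf₁.sub_ne_zero hz₁) hw₁
  have hzeros₂ := abs_sum_log_norm_sub_le (hf₂.sub_ne_zero hz₂) hw₂
  refine ⟨hne₂, ?_⟩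
  rw [← log_le_log_iff (norm_pos_iff.2 (div_ne_zero hne₁ hne₂))
      (mul_pos (exp_pos _) (norm_pos_iff.2 (div_ne_zero hz₁ hz₂))),
    log_mul (exp_pos _).ne' (norm_ne_zero_iff.2 (div_ne_zero hz₁ hz₂)), log_exp,
    norm_div, norm_div, log_div (norm_ne_zero_iff.2 hne₁) (norm_ne_zero_iff.2 hne₂),
    log_div (norm_ne_zero_iff.2 hz₁) (norm_ne_zero_iff.2 hz₂), hf₁.log_norm_eq hne₁,
    hf₂.log_norm_eq hne₂, hf₁.log_norm_eq hz₁, hf₂.log_norm_eq hz₂]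
  rw [abs_le] at hcofactor hzeros₁ hzeros₂
  linarith [hcofactor.2, hzeros₁.2, hzeros₂.1]

end IsZeroFactorization

theorem norm_iteratedDeriv_le_of_norm_le {φ : ℂ → ℂ} {l d : ℕ} (ht : 0 < t) (ht1 : t ≤ 1)
    (hl : l ≤ d) (hφ : ∀ w, ‖w - z‖ ≤ t → DifferentiableAt ℂ φ w)
    (hC : ∀ w, ‖w - z‖ ≤ t → ‖φ w‖ ≤ C) :
    ‖iteratedDeriv l φ z‖ ≤ d.factorial * C / t ^ d := by
  have hcl : DiffContOnCl ℂ φ (ball z t) := by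
    refine DifferentiableOn.diffContOnCl fun w hw => ?_
    rw [closure_ball _ ht.ne', mem_closedBall, dist_eq_norm] at hw
    exact (hφ w hw).differentiableWithinAt
  have hC0 : 0 ≤ C := (norm_nonneg _).trans (hC z (by simpa using ht.le))
  refine (Complex.norm_iteratedDeriv_le_of_forall_mem_sphere_norm_le l ht hcl fun w hw =>
    hC w (mem_sphere_iff_norm.1 hw).le).trans ?_
  have hpow : t ^ d ≤ t ^ l := pow_le_pow_of_le_one ht.le ht1 hl
  gcongr

theorem norm_wronskian_le_of_norm_div_le {d : ℕ} {F : Fin d → ℂ → ℂ} {u : ℂ → ℂ} (ht : 0 < t)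
    (ht1 : t ≤ 1) (hF : ∀ i, Differentiable ℂ (F i)) (hu : Differentiable ℂ u)
    (hu0 : ∀ w, ‖w - z‖ ≤ t → u w ≠ 0)
    (hC : ∀ i w, ‖w - z‖ ≤ t → ‖F i w / u w‖ ≤ C * ‖F i z / u z‖) :
    ‖wronskian F z‖ ≤ d.factorial * (d.factorial * C / t ^ d) ^ d * ∏ i, ‖F i z‖ := by
  have huz : u z ≠ 0 := hu0 z (by simpa using ht.le)
  have hratio : ‖wronskian (fun i w => F i w / u w) z‖ ≤
      d.factorial * (d.factorial * C / t ^ d) ^ d * ∏ i, ‖F i z / u z‖ := by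
    refine norm_wronskian_le fun i l hl => ?_
    refine (norm_iteratedDeriv_le_of_norm_le ht ht1 hl.le
      (fun w hw => (hF i w).div (hu w) (hu0 w hw)) (hC i)).trans_eq ?_
    ring
  rw [wronskian_eq_pow_mul_wronskian_div (fun i => (hF i).contDiff.contDiffAt)
    hu.contDiff.contDiffAt huz, norm_mul, norm_pow]
  refine (mul_le_mul_of_nonneg_left hratio (by positivity)).trans_eq ?_
  have : ‖u z‖ ≠ 0 := norm_ne_zero_iff.2 huz
  simp only [norm_div, Finset.prod_div_distrib, Finset.prod_const, Finset.card_univ,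
    Fintype.card_fin]
  field_simp

theorem sqrt_add_sum_le {κ : Type*} (s : Finset κ) {f : κ → ℝ} (hf : ∀ i, 0 ≤ f i) (hy : 0 ≤ y) :
    √(y + ∑ i ∈ s, f i) ≤ √y + ∑ i ∈ s, √(f i) := by
  classical
  induction s using Finset.induction_on with
  | empty => simp
  | insert i s hi ih =>
    have hadd {b b' : ℝ} (hb : 0 ≤ b) (hb' : 0 ≤ b') : √(b + b') ≤ √b + √b' := by
      rw [sqrt_le_left (by positivity), add_sq, sq_sqrt hb, sq_sqrt hb']
      nlinarith [mul_nonneg (sqrt_nonneg b) (sqrt_nonneg b')]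
    rw [Finset.sum_insert hi, Finset.sum_insert hi, add_left_comm, add_left_comm √y]
    exact (hadd (hf i) (add_nonneg hy (Finset.sum_nonneg fun i _ => hf i))).trans
      (by gcongr)

theorem log_le_two_mul_sqrt_div_add_log (hx : 0 < x) (hc : 0 < c) :
    log x ≤ 2 * (√x / c + log c) := by
  have hsqrt : 0 < √x := sqrt_pos.2 hx
  have h := log_le_sub_one_of_pos (div_pos hsqrt hc)
  rw [log_div hsqrt.ne' hc.ne', log_sqrt hx.le] at h
  linarith

theorem exists_circleIntegrable_log_add_sum_inv_norm_sub_le {κ : Type*} [Fintype κ] (a : κ → ℂ)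
    (hy : 0 < y) (hc : √y + Fintype.card κ * meanInvSqrtSin ≤ c) :
    ∃ V : ℂ → ℝ, CircleIntegrable V 0 1 ∧ circleAverage V 0 1 ≤ 2 * (1 + log c) ∧
      ∀ z, log (y + ∑ i, ‖z - a i‖⁻¹) ≤ V z := by
  have hc0 : 0 < c := by
    have := meanInvSqrtSin_nonneg
    exact lt_of_lt_of_le (by positivity) hc
  let S : ℂ → ℝ := fun z => ∑ i, (√‖z - a i‖)⁻¹
  have hint i : CircleIntegrable (fun z => (√‖z - a i‖)⁻¹) 0 1 :=
    circleIntegrable_inv_sqrt_norm_sub (a i)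
  have hS_int : CircleIntegrable S 0 1 := CircleIntegrable.fun_sum _ fun i _ => hint i
  have hS_avg : circleAverage S 0 1 ≤ Fintype.card κ * meanInvSqrtSin := by
    rw [circleAverage_fun_sum fun i _ => hint i]
    simpa using Finset.sum_le_card_nsmul Finset.univ _ _ fun i _ =>
      circleAverage_inv_sqrt_norm_sub_le (a i)
  have hcS_int : CircleIntegrable (fun z => (2 / c) • S z) 0 1 := hS_int.const_smul
  refine ⟨fun z => 2 * (√y / c + log c) + (2 / c) • S z,
    (circleIntegrable_const _ _ _).add hcS_int, ?_, fun z => ?_⟩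
  · rw [circleAverage_fun_add (circleIntegrable_const _ _ _) hcS_int, circleAverage_const,
      circleAverage_fun_smul, smul_eq_mul]
    have hle : (√y + circleAverage S 0 1) / c ≤ 1 := (div_le_one hc0).2 (by linarith)
    calc 2 * (√y / c + log c) + 2 / c * circleAverage S 0 1
        = 2 * ((√y + circleAverage S 0 1) / c + log c) := by ring
      _ ≤ 2 * (1 + log c) := by gcongr
  · have : 0 ≤ ∑ i, ‖z - a i‖⁻¹ := Finset.sum_nonneg fun i _ => by positivity
    have hsqrt : √(y + ∑ i, ‖z - a i‖⁻¹) ≤ √y + S z := by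
      simpa only [S, sqrt_inv] using
        sqrt_add_sum_le Finset.univ (fun i => inv_nonneg.2 (norm_nonneg (z - a i))) hy.le
    calc log (y + ∑ i, ‖z - a i‖⁻¹) ≤ 2 * (√(y + ∑ i, ‖z - a i‖⁻¹) / c + log c) :=
          log_le_two_mul_sqrt_div_add_log (by positivity) hc0
      _ ≤ 2 * ((√y + S z) / c + log c) := by gcongr
      _ = 2 * (√y / c + log c) + (2 / c) • S z := by rw [smul_eq_mul]; ring

end LogDerivative

section ControlledFamily

open Real

variable {ι : Type*} {G : ι → ℂ → ℂ} {ρ M x : ℝ} {z w : ℂ}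

/-- Entire functions `G j` whose mutual ratios have logarithmic mean at most `M` on the circle of
radius `ρ`, and whose zero counting functions up to radius `ρ ^ 2` are at most `M`. This is the
input of the logarithmic derivative lemma, which concerns the unit circle. -/
structure IsControlledFamily (G : ι → ℂ → ℂ) (ρ M : ℝ) : Prop where
  differentiable : ∀ j, Differentiable ℂ (G j)
  apply_zero_ne_zero : ∀ j, G j 0 ≠ 0
  one_lt : 1 < ρ
  le_two : ρ ≤ 2
  one_le : 1 ≤ M
  circleAverage_abs_le : ∀ i j, circleAverage (fun z => |log ‖G i z‖ - log ‖G j z‖|) 0 ρ ≤ M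
  circleAverage_sub_le : ∀ j, circleAverage (fun z => log ‖G j z‖) 0 (ρ ^ 2) - log ‖G j 0‖ ≤ M

namespace IsControlledFamily

theorem inv_le (hG : IsControlledFamily G ρ M) : (ρ - 1)⁻¹ ≤ M / (ρ - 1) := by
  rw [div_eq_mul_inv]
  exact le_mul_of_one_le_left (inv_nonneg.2 (by linarith [hG.one_lt])) hG.one_le

theorem le_div (hG : IsControlledFamily G ρ M) : M ≤ M / (ρ - 1) := by
  rw [le_div_iff₀ (by linarith [hG.one_lt])]
  nlinarith [hG.one_le, hG.le_two]

theorem one_le_div (hG : IsControlledFamily G ρ M) : 1 ≤ M / (ρ - 1) :=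
  hG.one_le.trans hG.le_div

theorem eight_div_mul_le (hG : IsControlledFamily G ρ M) {n₁ n₂ : ℝ}
    (hn₁ : n₁ ≤ 2 * (M / (ρ - 1))) (hn₂ : n₂ ≤ 2 * (M / (ρ - 1))) :
    8 / (ρ - 1) ^ 2 * (M + 4 * (n₁ + n₂)) ≤ 136 * (M / (ρ - 1)) ^ 3 := by
  have hinv := hG.inv_le
  have hρ : 0 ≤ (ρ - 1)⁻¹ := inv_nonneg.2 (by linarith [hG.one_lt])
  have hM := hG.le_div
  have hq := zero_le_one.trans hG.one_le_div
  calc 8 / (ρ - 1) ^ 2 * (M + 4 * (n₁ + n₂)) ≤ 8 / (ρ - 1) ^ 2 * (17 * (M / (ρ - 1))) := by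
        gcongr
        linarith
    _ = 136 * ((ρ - 1)⁻¹ ^ 2 * (M / (ρ - 1))) := by
        rw [div_eq_mul_inv 8, ← inv_pow]
        ring
    _ ≤ 136 * ((M / (ρ - 1)) ^ 2 * (M / (ρ - 1))) := by gcongr
    _ = 136 * (M / (ρ - 1)) ^ 3 := by ring

variable [Fintype ι] {n : ι → ℕ} {a : ∀ j, Fin (n j) → ℂ} {h : ι → ℂ → ℂ}

theorem norm_div_le (hG : IsControlledFamily G ρ M)
    (hf : ∀ j, IsZeroFactorization ρ (a j) (G j) (h j)) (hh : ∀ j z, ‖z‖ ≤ ρ → h j z ≠ 0)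
    (hz : ‖z‖ = 1) (hGz : ∀ j, G j z ≠ 0)
    (hx : 136 * (M / (ρ - 1)) ^ 3 + ∑ p : Σ j, Fin (n j), ‖z - a p.1 p.2‖⁻¹ ≤ x)
    (hw : ‖w - z‖ ≤ 1 / (4 * x)) (i j : ι) :
    G j w ≠ 0 ∧ ‖G i w / G j w‖ ≤ exp 2 * ‖G i z / G j z‖ := by
  have hq := hG.one_le_div
  have hq3 : M / (ρ - 1) ≤ (M / (ρ - 1)) ^ 3 := le_self_pow₀ hq (by norm_num)
  have hsum : 0 ≤ ∑ p : Σ j, Fin (n j), ‖z - a p.1 p.2‖⁻¹ :=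
    Finset.sum_nonneg fun _ _ => by positivity
  have hx1 : 1 ≤ x := by linarith
  have hwx : ‖w - z‖ * x ≤ 1 / 4 := by
    rw [le_div_iff₀ (by positivity)] at hw
    linarith
  have hshift {s : ℝ} (hs : s ≤ x) : ‖w - z‖ * s ≤ 1 / 4 :=
    (mul_le_mul_of_nonneg_left hs (norm_nonneg _)).trans hwx
  have hzeros j : 4 * (‖w - z‖ * ∑ k, ‖z - a j k‖⁻¹) ≤ 1 := by
    have hj : ∑ k, ‖z - a j k‖⁻¹ ≤ ∑ p : Σ j, Fin (n j), ‖z - a p.1 p.2‖⁻¹ := by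
      rw [Fintype.sum_sigma]
      exact Finset.single_le_sum (f := fun j => ∑ k, ‖z - a j k‖⁻¹)
        (fun _ _ => Finset.sum_nonneg fun _ _ => by positivity) (Finset.mem_univ j)
    have := hshift (s := ∑ k, ‖z - a j k‖⁻¹) (by linarith [pow_nonneg (zero_le_one.trans hq) 3])
    linarith
  have hcard j := (hf j).card_le (hG.differentiable j) (hG.apply_zero_ne_zero j) hG.one_lt
    hG.le_two (hG.circleAverage_sub_le j)
  refine (hf i).norm_div_le (hf j) (hG.differentiable i) (hG.differentiable j)
    (hG.apply_zero_ne_zero i) (hG.apply_zero_ne_zero j) (hh i) (hh j) hG.one_lt hG.le_two hz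
    (hGz i) (hGz j) ?_ (hzeros i) (hzeros j) ?_
  · have hρ : 0 < ρ - 1 := by linarith [hG.one_lt]
    have := hshift (hG.inv_le.trans (by linarith))
    rw [← div_eq_mul_inv, div_le_iff₀ hρ] at this
    linarith
  · have hmean := hG.circleAverage_abs_le i j
    have := hshift ((hG.eight_div_mul_le (hcard i) (hcard j)).trans (by linarith))
    calc _ ≤ 8 / (ρ - 1) ^ 2 * ‖w - z‖ * (M + 4 * (n i + n j)) := by gcongr
      _ = ‖w - z‖ * (8 / (ρ - 1) ^ 2 * (M + 4 * (n i + n j))) := by ring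
      _ ≤ 1 := by linarith

theorem norm_wronskian_le {d : ℕ} (hd : 0 < d) (hG : IsControlledFamily G ρ M)
    (hf : ∀ j, IsZeroFactorization ρ (a j) (G j) (h j)) (hh : ∀ j z, ‖z‖ ≤ ρ → h j z ≠ 0)
    (hz : ‖z‖ = 1) (hGz : ∀ j, G j z ≠ 0)
    (hx : 136 * (M / (ρ - 1)) ^ 3 + ∑ p : Σ j, Fin (n j), ‖z - a p.1 p.2‖⁻¹ = x)
    (e : Fin d → ι) :
    ‖wronskian (fun i => G (e i)) z‖ ≤
      d.factorial * (d.factorial * exp 2 * 4 ^ d) ^ d * x ^ (d * d) * ∏ i, ‖G (e i) z‖ := by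
  have hx1 : 1 ≤ x := by
    have hq3 := one_le_pow₀ hG.one_le_div (n := 3)
    have : 0 ≤ ∑ p : Σ j, Fin (n j), ‖z - a p.1 p.2‖⁻¹ :=
      Finset.sum_nonneg fun _ _ => by positivity
    linarith
  have ht1 : 1 / (4 * x) ≤ 1 := (div_le_one (by positivity)).2 (by linarith)
  refine (norm_wronskian_le_of_norm_div_le (by positivity) ht1
    (fun i => hG.differentiable (e i)) (hG.differentiable (e ⟨0, hd⟩))
    (fun w hw => (hG.norm_div_le hf hh hz hGz hx.le hw (e ⟨0, hd⟩) _).1)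
    fun i w hw => (hG.norm_div_le hf hh hz hGz hx.le hw (e i) _).2).trans_eq ?_
  rw [one_div, inv_pow, div_inv_eq_mul, mul_pow 4 x, ← mul_assoc, mul_pow _ (x ^ d), ← pow_mul,
    ← mul_assoc]

theorem sqrt_add_card_sigma_mul_le (hG : IsControlledFamily G ρ M)
    (hf : ∀ j, IsZeroFactorization ρ (a j) (G j) (h j)) {μ : ℝ} (hμ : 0 ≤ μ) :
    √(136 * (M / (ρ - 1)) ^ 3) + Fintype.card (Σ j, Fin (n j)) * μ ≤
      (136 + 2 * Fintype.card ι * μ) * (M / (ρ - 1)) ^ 3 := by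
  have hq := hG.one_le_div
  have hcard : (Fintype.card (Σ j, Fin (n j)) : ℝ) ≤ 2 * Fintype.card ι * (M / (ρ - 1)) :=
    calc (Fintype.card (Σ j, Fin (n j)) : ℝ) = ∑ j, (n j : ℝ) := by simp
      _ ≤ ∑ _j : ι, 2 * (M / (ρ - 1)) := Finset.sum_le_sum fun j _ =>
          (hf j).card_le (hG.differentiable j) (hG.apply_zero_ne_zero j) hG.one_lt hG.le_two
            (hG.circleAverage_sub_le j)
      _ = 2 * Fintype.card ι * (M / (ρ - 1)) := by
          rw [Finset.sum_const, nsmul_eq_mul, Finset.card_univ]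
          ring
  have hq3 : M / (ρ - 1) ≤ (M / (ρ - 1)) ^ 3 := le_self_pow₀ hq (by norm_num)
  have hsqrt : √(136 * (M / (ρ - 1)) ^ 3) ≤ 136 * (M / (ρ - 1)) ^ 3 := by
    rw [sqrt_le_left (by positivity)]
    exact le_self_pow₀ (by linarith) two_ne_zero
  calc _ ≤ 136 * (M / (ρ - 1)) ^ 3 + 2 * Fintype.card ι * (M / (ρ - 1)) ^ 3 * μ := by
        gcongr
        exact hcard.trans (by gcongr)
    _ = (136 + 2 * Fintype.card ι * μ) * (M / (ρ - 1)) ^ 3 := by ring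

end IsControlledFamily

theorem log_add_mul_le {D Q q k v : ℝ} (hQ : 1 ≤ Q) (hq : 1 ≤ q) (hk : 0 ≤ k)
    (hv : v ≤ 2 * (1 + log (Q * q ^ 3))) :
    log D + k * v ≤ (|log D| + k * (8 + 2 * log Q)) * (1 + log q) := by
  have hlogQ := log_nonneg hQ
  have hlogq := log_nonneg hq
  have hv' : v ≤ (8 + 2 * log Q) * (1 + log q) := by
    rw [log_mul (by positivity) (by positivity), log_pow, Nat.cast_ofNat] at hv
    linarith [mul_nonneg hlogQ hlogq]
  calc log D + k * v ≤ |log D| * (1 + log q) + k * ((8 + 2 * log Q) * (1 + log q)) :=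
        add_le_add ((le_abs_self _).trans (le_mul_of_one_le_right (abs_nonneg _) (by linarith)))
          (mul_le_mul_of_nonneg_left hv' hk)
    _ = _ := by ring

theorem exists_norm_wronskian_le_exp_mul_prod (ι : Type*) [Finite ι] {d : ℕ} (hd : 0 < d) :
    ∃ K : ℝ, 0 ≤ K ∧ ∀ (G : ι → ℂ → ℂ) (ρ M : ℝ), IsControlledFamily G ρ M →
      ∃ V : ℂ → ℝ, CircleIntegrable V 0 1 ∧
        circleAverage V 0 1 ≤ K * (1 + log (M / (ρ - 1))) ∧
        ∀ z, ‖z‖ = 1 → (∀ j, G j z ≠ 0) → ∀ e : Fin d → ι,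
          ‖wronskian (fun i => G (e i)) z‖ ≤ exp (V z) * ∏ i, ‖G (e i) z‖ := by
  have := Fintype.ofFinite ι
  set D : ℝ := d.factorial * (d.factorial * exp 2 * 4 ^ d) ^ d with hD
  have hD0 : 0 < D := by positivity
  set Q : ℝ := 136 + 2 * Fintype.card ι * meanInvSqrtSin
  have hQ : 1 ≤ Q := by
    have : 0 ≤ 2 * Fintype.card ι * meanInvSqrtSin := by
      have := meanInvSqrtSin_nonneg
      positivity
    linarith
  refine ⟨|log D| + d * d * (8 + 2 * log Q), by have := log_nonneg hQ; positivity,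
    fun G ρ M hG => ?_⟩
  choose n a h hf hh using fun j => exists_isZeroFactorization (hG.differentiable j)
    (hG.apply_zero_ne_zero j) (zero_lt_one.trans hG.one_lt)
  have hq : 1 ≤ M / (ρ - 1) := hG.one_le_div
  obtain ⟨V, hV_int, hV_avg, hV⟩ := exists_circleIntegrable_log_add_sum_inv_norm_sub_le
    (fun p : Σ j, Fin (n j) => a p.1 p.2) (by positivity)
    (hG.sqrt_add_card_sigma_mul_le hf meanInvSqrtSin_nonneg)
  have hV_int' : CircleIntegrable (fun z => (d * d : ℝ) • V z) 0 1 := hV_int.const_smul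
  refine ⟨fun z => log D + (d * d : ℝ) • V z, (circleIntegrable_const _ _ _).add hV_int', ?_,
    fun z hz hGz e => (hG.norm_wronskian_le hd hf hh hz hGz rfl e).trans ?_⟩
  · rw [circleAverage_fun_add (circleIntegrable_const _ _ _) hV_int', circleAverage_const,
      circleAverage_fun_smul, smul_eq_mul]
    exact log_add_mul_le hQ hq (by positivity) hV_avg
  · have : 0 < 136 * (M / (ρ - 1)) ^ 3 + ∑ p : Σ j, Fin (n j), ‖z - a p.1 p.2‖⁻¹ :=
      add_pos_of_pos_of_nonneg (by positivity) (Finset.sum_nonneg fun _ _ => by positivity)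
    gcongr
    rw [← hD, ← log_le_iff_le_exp (by positivity), log_mul hD0.ne' (by positivity), log_pow,
      Nat.cast_mul]
    exact add_le_add_right (mul_le_mul_of_nonneg_left (hV z) (by positivity)) _

end ControlledFamily

/-! ### A growth lemma of Borel type -/

section BorelGrowth

open Real Filter Asymptotics

variable {T : ℝ → ℝ} {A γ K C r₀ : ℝ}

theorem exists_le_mul_exp_of_forall_exists_two_mul_le (hA : 1 ≤ A) (hr₀ : 1 ≤ r₀)
    (hAr₀ : A ≤ T r₀)
    (h_step : ∀ r, 1 ≤ r → A ≤ T r → ∃ r', r ≤ r' ∧ r' ≤ r * exp (2 / T r) ∧ 2 * T r ≤ T r')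
    (n : ℕ) : ∃ r, 1 ≤ r ∧ r ≤ r₀ * exp (4 - 4 / 2 ^ n) ∧ 2 ^ n * A ≤ T r := by
  induction n with
  | zero => exact ⟨r₀, hr₀, by simp, by simpa using hAr₀⟩
  | succ n ih =>
    obtain ⟨r, hr, hr_le, hTr⟩ := ih
    have hpow : (1 : ℝ) ≤ 2 ^ n := one_le_pow₀ one_le_two
    obtain ⟨r', hrr', hr'_le, hTr'⟩ := h_step r hr (by nlinarith)
    refine ⟨r', hr.trans hrr', ?_, by rw [pow_succ]; linarith⟩
    calc r' ≤ r * exp (2 / T r) := hr'_le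
      _ ≤ r₀ * exp (4 - 4 / 2 ^ n) * exp (2 / 2 ^ n) := by
        gcongr
        nlinarith
      _ = r₀ * exp (4 - 4 / 2 ^ (n + 1)) := by
        rw [mul_assoc, ← exp_add]
        congr 2
        field_simp
        ring

theorem one_add_one_div_sq_le_exp {t : ℝ} (ht : 0 < t) : (1 + 1 / t) ^ 2 ≤ exp (2 / t) :=
  calc (1 + 1 / t) ^ 2 ≤ exp (1 / t) ^ 2 := by
        gcongr
        linarith [add_one_le_exp (1 / t)]
    _ = exp (2 / t) := by rw [← exp_nat_mul, Nat.cast_ofNat, mul_one_div]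

/- If the conclusion failed at every `r`, then `T` would double infinitely often along a bounded
sequence of radii, since `∏ (1 + 1 / T)` converges geometrically. -/
theorem exists_growth_le_two_mul (h_bdd : ∀ R, BddAbove (T '' Set.Icc 1 R)) (hA : 1 ≤ A)
    (hr₀ : 1 ≤ r₀) (hAr₀ : A ≤ T r₀) :
    ∃ r, 1 ≤ r ∧ A ≤ T r ∧ T ((1 + 1 / T r) * r) ≤ 2 * T r ∧
      T ((1 + 1 / T r) ^ 2 * r) ≤ 2 * T r := by
  by_contra! h_fail
  have h_step (r : ℝ) (hr : 1 ≤ r) (hAr : A ≤ T r) :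
      ∃ r', r ≤ r' ∧ r' ≤ r * exp (2 / T r) ∧ 2 * T r ≤ T r' := by
    have hTr : 0 < T r := by linarith
    have h_exp := one_add_one_div_sq_le_exp hTr
    have h_one : 1 ≤ 1 + 1 / T r := le_add_of_nonneg_right (by positivity)
    have h_sq : 1 + 1 / T r ≤ (1 + 1 / T r) ^ 2 := le_self_pow₀ h_one two_ne_zero
    rcases le_or_gt (T ((1 + 1 / T r) * r)) (2 * T r) with h | h
    · refine ⟨(1 + 1 / T r) ^ 2 * r, le_mul_of_one_le_left (by positivity) (h_one.trans h_sq), ?_,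
        (h_fail r hr hAr h).le⟩
      rw [mul_comm]
      gcongr
    · refine ⟨(1 + 1 / T r) * r, le_mul_of_one_le_left (by positivity) h_one, ?_, h.le⟩
      rw [mul_comm]
      gcongr
      exact h_sq.trans h_exp
  obtain ⟨B, hB⟩ := h_bdd (r₀ * exp 4)
  obtain ⟨n, hn⟩ := pow_unbounded_of_one_lt B one_lt_two
  obtain ⟨r, hr, hr_le, hTr⟩ :=
    exists_le_mul_exp_of_forall_exists_two_mul_le hA hr₀ hAr₀ h_step n
  have hrB : T r ≤ B := by
    refine hB ⟨r, ⟨hr, hr_le.trans ?_⟩, rfl⟩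
    gcongr
    exact sub_le_self _ (by positivity)
  have : (0 : ℝ) < 2 ^ n := by positivity
  nlinarith

theorem eventually_const_mul_log_add_const_lt (hγ : 0 < γ) (a b : ℝ) :
    ∀ᶠ t in atTop, a * log t + b < γ * t := by
  have h_log : (fun t => a * log t + b) =o[atTop] (id : ℝ → ℝ) :=
    (isLittleO_log_id_atTop.const_mul_left a).add (isLittleO_const_id_atTop b)
  filter_upwards [h_log.bound (half_pos hγ), eventually_gt_atTop 0] with t ht ht0
  rw [id, norm_of_nonneg ht0.le] at ht
  nlinarith [le_norm_self (a * log t + b)]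

theorem log_div_one_div_le {t : ℝ} (ht : 1 ≤ t) (hC : 0 ≤ C) :
    log ((4 * t + C) / (1 / t)) ≤ log (4 + C) + 2 * log t := by
  rw [← Nat.cast_ofNat (R := ℝ) (n := 2), ← log_pow, ← log_mul (by positivity) (by positivity),
    div_div_eq_mul_div, div_one]
  refine log_le_log (by positivity) ?_
  nlinarith [mul_nonneg hC (by positivity : 0 ≤ t)]

theorem nonpos_of_forall_mul_le_mul_log (h_bdd : ∀ R, BddAbove (T '' Set.Icc 1 R))
    (hT : Tendsto T atTop atTop) (hK : 0 ≤ K)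
    (h_le : ∀ r ρ M : ℝ, 1 ≤ r → 1 < ρ → ρ ≤ 2 → 1 ≤ M → 2 * T (ρ * r) + C ≤ M →
      T (ρ ^ 2 * r) + C ≤ M → γ * T r ≤ K * (1 + log (M / (ρ - 1))) + C) :
    γ ≤ 0 := by
  by_contra! hγ
  obtain ⟨A, hA⟩ := eventually_atTop.1
    (eventually_const_mul_log_add_const_lt hγ (2 * K) (K * (1 + log (4 + |C|)) + C))
  obtain ⟨r₀, hAr₀, hr₀⟩ :=
    ((hT.eventually_ge_atTop (max 1 A)).and (eventually_ge_atTop 1)).exists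
  obtain ⟨r, hr, hAr, hT₁, hT₂⟩ :=
    exists_growth_le_two_mul h_bdd (le_max_left 1 A) hr₀ hAr₀
  have hA_lt := hA (T r) ((le_max_right 1 A).trans hAr)
  have hT1 : 1 ≤ T r := (le_max_left 1 A).trans hAr
  have h_inv : 1 / T r ≤ 1 := (div_le_one (by positivity)).2 hT1
  have h_main := h_le r (1 + 1 / T r) (4 * T r + |C|) hr (lt_add_of_pos_right 1 (by positivity))
    (by linarith) (by linarith [abs_nonneg C]) (by linarith [le_abs_self C])
    (by linarith [le_abs_self C])
  rw [add_sub_cancel_left] at h_main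
  have h_log := mul_le_mul_of_nonneg_left (log_div_one_div_le hT1 (abs_nonneg C)) hK
  linarith

end BorelGrowth

/-! ### The Cartan characteristic function -/

section CartanCharacteristic

open Real Filter

variable {κ : Type*} [Fintype κ] {F : κ → ℂ → ℂ} {c : κ → ℂ} {B r : ℝ} {x : ℂ}

/-- A tuple of entire functions without common zeros: an admissible representation of the
holomorphic curve `(F₀ : ⋯ : Fₙ)` in projective space. -/
structure IsAdmissibleRepresentation {κ : Type*} (F : κ → ℂ → ℂ) : Prop where
  differentiable : ∀ l, Differentiable ℂ (F l)
  exists_ne_zero : ∀ z, ∃ l, F l z ≠ 0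

/-- The pullback under the curve `F` of the linear form with coefficients `c`. -/
def linearPullback (c : κ → ℂ) (F : κ → ℂ → ℂ) (z : ℂ) : ℂ := c ⬝ᵥ fun l => F l z

/-- Cartan's characteristic function of the curve `F`, up to an additive constant; the
representation is measured in the maximum norm. -/
noncomputable def cartanCharacteristic (F : κ → ℂ → ℂ) (r : ℝ) : ℝ :=
  circleAverage (fun z => log ‖fun l => F l z‖) 0 r

theorem norm_dotProduct_le (c v : κ → ℂ) : ‖c ⬝ᵥ v‖ ≤ (∑ l, ‖c l‖) * ‖v‖ := by
  rw [Finset.sum_mul]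
  refine norm_sum_le_of_le _ fun l _ => ?_
  rw [norm_mul]
  gcongr
  exact norm_le_pi_norm v l

theorem log_norm_dotProduct_le {v : κ → ℂ} (hcB : ∑ l, ‖c l‖ ≤ B) (hv : c ⬝ᵥ v ≠ 0) :
    log ‖c ⬝ᵥ v‖ ≤ log B + log ‖v‖ := by
  have hcv := norm_pos_iff.2 hv
  have h_le : ‖c ⬝ᵥ v‖ ≤ B * ‖v‖ := (norm_dotProduct_le c v).trans (by gcongr)
  have hB : 0 < B := pos_of_mul_pos_left (hcv.trans_le h_le) (norm_nonneg _)
  have h_norm : 0 < ‖v‖ := pos_of_mul_pos_right (hcv.trans_le h_le) hB.le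
  rw [← log_mul hB.ne' h_norm.ne']
  exact log_le_log hcv h_le

theorem differentiable_linearPullback (hF : ∀ l, Differentiable ℂ (F l)) (c : κ → ℂ) :
    Differentiable ℂ (linearPullback c F) :=
  Differentiable.fun_sum fun l _ => (hF l).const_mul (c l)

theorem exists_linearPullback_ne_zero (hli : LinearIndependent ℂ F) (hc : c ≠ 0) :
    ∃ x, linearPullback c F x ≠ 0 := by
  by_contra! h
  refine hc (funext (Fintype.linearIndependent_iff.1 hli c (funext fun z => ?_)))
  simpa [linearPullback, dotProduct] using h z

namespace IsAdmissibleRepresentation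

theorem norm_pos (hF : IsAdmissibleRepresentation F) (z : ℂ) : 0 < ‖fun l => F l z‖ := by
  obtain ⟨l, hl⟩ := hF.exists_ne_zero z
  exact norm_pos_iff.2 fun h => hl (congrFun h l)

theorem continuous_log_norm (hF : IsAdmissibleRepresentation F) :
    Continuous fun z => log ‖fun l => F l z‖ :=
  (continuous_pi fun l => (hF.differentiable l).continuous).norm.log fun z => (hF.norm_pos z).ne'

theorem circleIntegrable_log_norm (hF : IsAdmissibleRepresentation F) (r : ℝ) :
    CircleIntegrable (fun z => log ‖fun l => F l z‖) 0 r :=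
  hF.continuous_log_norm.continuousOn.circleIntegrable'

theorem bddAbove_cartanCharacteristic (hF : IsAdmissibleRepresentation F) (R : ℝ) :
    BddAbove (cartanCharacteristic F '' Set.Icc 1 R) := by
  obtain ⟨B, hB⟩ := (isCompact_closedBall (0 : ℂ) R).bddAbove_image
    hF.continuous_log_norm.continuousOn
  refine ⟨B, ?_⟩
  rintro _ ⟨r, ⟨hr, hrR⟩, rfl⟩
  refine circleAverage_mono_on_of_le_circle (hF.circleIntegrable_log_norm r) fun z hz =>
    hB ⟨z, ?_, rfl⟩
  rw [mem_sphere_zero_iff_norm, abs_of_nonneg (zero_le_one.trans hr)] at hz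
  exact mem_closedBall_zero_iff.2 (hz.trans_le hrR)

theorem circleAverage_log_norm_linearPullback_le (hF : IsAdmissibleRepresentation F)
    (hcB : ∑ l, ‖c l‖ ≤ B) (hx : linearPullback c F x ≠ 0) (hr : r ≠ 0) :
    circleAverage (fun z => log ‖linearPullback c F z‖) 0 r ≤
      log B + cartanCharacteristic F r := by
  have hg := differentiable_linearPullback hF.differentiable c
  rw [cartanCharacteristic, ← circleAverage_const (log B) 0 r,
    ← circleAverage_fun_add (circleIntegrable_const _ _ _) (hF.circleIntegrable_log_norm r)]
  refine circleAverage_mono_of_codiscreteWithin hr (_root_.circleIntegrable_log_norm hg r)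
    ((circleIntegrable_const _ _ _).add (hF.circleIntegrable_log_norm r)) ?_
  filter_upwards [eventually_codiscreteWithin_ne_zero hg hx _] with z hz _
  exact log_norm_dotProduct_le hcB hz

/- A nontrivial combination of the `F l` vanishing at the origin contributes at least `log r` to the
counting function. -/
theorem exists_log_sub_le_cartanCharacteristic [Nontrivial κ] (hF : IsAdmissibleRepresentation F)
    (hli : LinearIndependent ℂ F) :
    ∃ C, ∀ r, 1 ≤ r → log r - C ≤ cartanCharacteristic F r := by
  obtain ⟨v, hv, hv0⟩ : ∃ v, linearPullback v F 0 = 0 ∧ v ≠ 0 := by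
    have h_ker : (Fintype.linearCombination ℂ fun l => F l 0).ker ≠ ⊥ :=
      LinearMap.ker_ne_bot_of_finrank_lt (by simpa using Fintype.one_lt_card (α := κ))
    exact Submodule.exists_mem_ne_zero_of_ne_bot h_ker
  have hg := differentiable_linearPullback hF.differentiable v
  obtain ⟨x, hx⟩ := exists_linearPullback_ne_zero hli hv0
  refine ⟨log (∑ l, ‖v l‖) - log ‖meromorphicTrailingCoeffAt (linearPullback v F) 0‖,
    fun r hr => ?_⟩
  have h_order : (1 : ℝ) ≤ analyticOrderNatAt (linearPullback v F) 0 := by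
    have h := (hg.analyticAt 0).analyticOrderAt_ne_zero.2 hv
    rw [← Nat.cast_analyticOrderNatAt (analyticOrderAt_ne_top hg hx 0)] at h
    exact_mod_cast Nat.one_le_iff_ne_zero.2 (by exact_mod_cast h)
  have h_up := hF.circleAverage_log_norm_linearPullback_le le_rfl hx (by positivity : r ≠ 0)
  have h_low := analyticOrderNatAt_mul_log_add_le_circleAverage hg hx (by positivity : 0 < r)
  nlinarith [log_nonneg hr]

theorem tendsto_cartanCharacteristic_atTop [Nontrivial κ] (hF : IsAdmissibleRepresentation F)
    (hli : LinearIndependent ℂ F) : Tendsto (cartanCharacteristic F) atTop atTop := by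
  obtain ⟨C, hC⟩ := hF.exists_log_sub_le_cartanCharacteristic hli
  refine tendsto_atTop_mono' _ ?_ (tendsto_atTop_add_const_right _ (-C) tendsto_log_atTop)
  filter_upwards [eventually_ge_atTop 1] with r hr using hC r hr

end IsAdmissibleRepresentation

end CartanCharacteristic

/-! ### The second main theorem with Nochka weights -/

section Counting

open Real

variable {ι : Type*} {d n : ℕ} {b : ι → Fin d → ℂ} {F : Fin d → ℂ → ℂ}
  {ω τ : ι → ℝ} {θ r : ℝ}

theorem sum_mul_circleAverage_sub_le_of_sum_mul_order_le [Fintype ι] {W : ℂ → ℂ} {g : ι → ℂ → ℂ}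
    (hW : Differentiable ℂ W) (hW0 : W 0 ≠ 0) (hg : ∀ j, Differentiable ℂ (g j))
    (hg0 : ∀ j, g j 0 ≠ 0)
    (h_order : ∀ w, ∑ j, τ j * analyticOrderNatAt (g j) w ≤ analyticOrderNatAt W w)
    (hr : 0 < r) :
    ∑ j, τ j * (circleAverage (fun z => log ‖g j z‖) 0 r - log ‖g j 0‖) ≤
      circleAverage (fun z => log ‖W z‖) 0 r - log ‖W 0‖ := by
  have h_fin (j : ι) : Function.HasFiniteSupport fun u =>
      τ j * (analyticOrderNatAt (g j) u * log⁺ (r * ‖u‖⁻¹)) :=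
    (finite_support_analyticOrderNatAt_mul_posLog (hg j) (hg0 j) hr).subset
      (Function.support_mul_subset_right _ _)
  simp only [circleAverage_log_norm_sub_log_norm (hg _) (hg0 _) hr,
    circleAverage_log_norm_sub_log_norm hW hW0 hr, mul_finsum]
  rw [← finsum_sum_comm _ _ fun j _ => h_fin j]
  refine finsum_le_finsum' (.sum h_fin _)
    (finite_support_analyticOrderNatAt_mul_posLog hW hW0 hr) fun u => ?_
  simp only [← mul_assoc, ← Finset.sum_mul]
  exact mul_le_mul_of_nonneg_right (h_order u) posLog_nonneg

theorem differentiable_wronskian (hF : ∀ l, Differentiable ℂ (F l)) :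
    Differentiable ℂ (wronskian F) := fun z =>
  (analyticAt_wronskian fun i => (hF i).analyticAt z).differentiableAt

theorem wronskian_linearPullback (hF : ∀ l, Differentiable ℂ (F l)) (c : Fin d → Fin d → ℂ)
    (z : ℂ) :
    wronskian (fun i => linearPullback (c i) F) z = (Matrix.of c).det * wronskian F z :=
  wronskian_linearCombination (fun i => (hF i).contDiff.contDiffAt) _

theorem sum_order_sub_le_order_wronskian (hF : IsAdmissibleRepresentation F)
    {x : ℂ} (hW : wronskian F x ≠ 0) {c : Fin d → Fin d → ℂ} (hc : (Matrix.of c).det ≠ 0)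
    (w : ℂ) :
    ∑ i, (analyticOrderNatAt (linearPullback (c i) F) w - (d - 1)) ≤
      analyticOrderNatAt (wronskian F) w := by
  have h_wronskian := funext (wronskian_linearPullback hF.differentiable c)
  have h_le := sum_le_analyticOrderAt_wronskian (w := w) (F := fun i => linearPullback (c i) F)
    (n := fun i => analyticOrderNatAt (linearPullback (c i) F) w)
    (fun i => (differentiable_linearPullback hF.differentiable _).analyticAt w)
    (fun i => ENat.natCast_toNat_le_self _)
  have h_const : analyticOrderAt (fun _ : ℂ => (Matrix.of c).det) w = 0 :=
    analyticAt_const.analyticOrderAt_eq_zero.2 hc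
  have hW' := differentiable_wronskian hF.differentiable
  rw [h_wronskian, ← Pi.mul_def (fun _ => (Matrix.of c).det),
    analyticOrderAt_mul analyticAt_const (hW'.analyticAt w), h_const, zero_add,
    ← Nat.cast_analyticOrderNatAt (analyticOrderAt_ne_top hW' hW w)] at h_le
  exact_mod_cast h_le

theorem sum_weight_mul_order_sub_le_order_wronskian [Fintype ι]
    (hω : IsNochkaWeight (spanRank ℂ b) d n ω θ)
    (hb : InSubgeneralPosition ℂ b n) (hn : n + 1 ≤ Fintype.card ι)
    (hF : IsAdmissibleRepresentation F) {x : ℂ} (hW : wronskian F x ≠ 0) (w : ℂ) :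
    ∑ j, ω j * (analyticOrderNatAt (linearPullback (b j) F) w - (d - 1) : ℕ) ≤
      analyticOrderNatAt (wronskian F) w := by
  obtain ⟨δ, hδ, h_far⟩ := hb.exists_pos_forall_notMem_mul_norm_le hn
  obtain ⟨R, hR, h_notMem⟩ := h_far fun l => F l w
  obtain ⟨e, -, h_det, h_sum⟩ := hω.exists_det_ne_zero_sum_le hb hR
    (x := fun j => (analyticOrderNatAt (linearPullback (b j) F) w - (d - 1) : ℕ))
    fun j _ => Nat.cast_nonneg _
  have h_zero (j : ι) (hj : j ∉ R) : analyticOrderNatAt (linearPullback (b j) F) w = 0 := by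
    have h_ne : linearPullback (b j) F w ≠ 0 :=
      norm_pos_iff.1 ((mul_pos hδ (hF.norm_pos w)).trans_le (h_notMem j hj))
    exact by_contra fun h => h_ne (apply_eq_zero_of_analyticOrderNatAt_ne_zero h)
  rw [← Finset.sum_subset R.subset_univ fun j _ hj => by simp [h_zero j hj]]
  exact h_sum.trans (mod_cast sum_order_sub_le_order_wronskian hF hW h_det w)

end Counting

section SecondMainTheorem

open Real

variable {ι : Type*} {d n : ℕ} {b : ι → Fin d → ℂ} {F : Fin d → ℂ → ℂ}
  {ω τ : ι → ℝ} {θ B D : ℝ}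

theorem IsNochkaWeight.exists_det_ne_zero_sum_univ_le [Fintype ι]
    (hω : IsNochkaWeight (spanRank ℂ b) d n ω θ) (hb : InSubgeneralPosition ℂ b n)
    {R : Finset ι} (hR : R.card = n + 1) {x : ι → ℝ} (hx : ∀ j, 0 ≤ x j) (hD : 0 ≤ D)
    (hxD : ∀ j, j ∉ R → x j ≤ D) :
    ∃ e : Fin d → ι, (Matrix.of fun i => b (e i)).det ≠ 0 ∧
      ∑ j, ω j * x j ≤ ∑ i, x (e i) + (∑ j, ω j) * D := by
  classical
  obtain ⟨e, -, h_det, h_sum⟩ := hω.exists_det_ne_zero_sum_le hb hR fun j _ => hx j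
  refine ⟨e, h_det, ?_⟩
  rw [← Finset.sum_add_sum_compl R, Finset.sum_mul]
  refine add_le_add h_sum ?_
  calc ∑ j ∈ Rᶜ, ω j * x j ≤ ∑ j ∈ Rᶜ, ω j * D :=
        Finset.sum_le_sum fun j hj =>
          mul_le_mul_of_nonneg_left (hxD j (Finset.mem_compl.1 hj)) (hω.nonneg j)
    _ ≤ ∑ j, ω j * D :=
        Finset.sum_le_sum_of_subset_of_nonneg (Finset.subset_univ _) fun j _ _ =>
          mul_nonneg (hω.nonneg j) hD

theorem IsNochkaWeight.exists_forall_sum_mul_log_sub_le [Fintype ι]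
    (hω : IsNochkaWeight (spanRank ℂ b) d n ω θ) (hb : InSubgeneralPosition ℂ b n)
    (hn : n + 1 ≤ Fintype.card ι) (hτ : ∀ j, τ j ≤ ω j)
    (hbB : ∀ j, ∑ l, ‖b j l‖ ≤ B) :
    ∃ C : ℝ, ∀ v, (∀ j, b j ⬝ᵥ v ≠ 0) → ∃ e : Fin d → ι, (Matrix.of fun i => b (e i)).det ≠ 0 ∧
      ∑ j, τ j * (log ‖v‖ - log ‖b j ⬝ᵥ v‖) ≤ ∑ i, (log ‖v‖ - log ‖b (e i) ⬝ᵥ v‖) + C := by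
  obtain ⟨δ, hδ, h_far⟩ := hb.exists_pos_forall_notMem_mul_norm_le hn
  refine ⟨d * log B + (∑ j, ω j) * |log B - log δ| - (∑ j, τ j) * log B, fun v hv => ?_⟩
  obtain ⟨R, hR, h_notMem⟩ := h_far v
  have hx (j : ι) : 0 ≤ log B + (log ‖v‖ - log ‖b j ⬝ᵥ v‖) := by
    linarith [log_norm_dotProduct_le (hbB j) (hv j)]
  have hxD (j : ι) (hj : j ∉ R) :
      log B + (log ‖v‖ - log ‖b j ⬝ᵥ v‖) ≤ |log B - log δ| := by
    have hv0 : v ≠ 0 := fun h => hv j (by rw [h, dotProduct_zero])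
    have h_log := log_le_log (mul_pos hδ (norm_pos_iff.2 hv0)) (h_notMem j hj)
    rw [log_mul hδ.ne' (norm_ne_zero_iff.2 hv0)] at h_log
    linarith [le_abs_self (log B - log δ)]
  obtain ⟨e, h_det, h_sum⟩ :=
    hω.exists_det_ne_zero_sum_univ_le hb hR hx (abs_nonneg (log B - log δ)) hxD
  refine ⟨e, h_det, ?_⟩
  have h_τ := (Finset.sum_le_sum fun j _ =>
    mul_le_mul_of_nonneg_right (hτ j) (hx j)).trans h_sum
  simp only [mul_add, Finset.sum_add_distrib, ← Finset.sum_mul, Finset.sum_const,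
    Finset.card_univ, Fintype.card_fin, nsmul_eq_mul] at h_τ
  linarith

theorem circleAverage_comp_const_mul (u : ℂ → ℝ) (r ρ : ℝ) :
    circleAverage (fun z => u (r * z)) 0 ρ = circleAverage u 0 (ρ * r) := by
  simp only [circleAverage_def, circleMap, zero_add, Complex.ofReal_mul, mul_left_comm (r : ℂ),
    mul_assoc]

theorem abs_sub_le_of_le {x y t : ℝ} (hx : x ≤ t) (hy : y ≤ t) : |x - y| ≤ 2 * t - (x + y) := by
  rw [abs_le]
  constructor <;> linarith

namespace IsAdmissibleRepresentation

theorem circleAverage_abs_log_norm_sub_le (hF : IsAdmissibleRepresentation F)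
    {c c' : Fin d → ℂ} (hc : ∑ l, ‖c l‖ ≤ B) (hc' : ∑ l, ‖c' l‖ ≤ B)
    (hc0 : linearPullback c F 0 ≠ 0) (hc0' : linearPullback c' F 0 ≠ 0) {r : ℝ} (hr : 0 < r) :
    circleAverage (fun z => |log ‖linearPullback c F z‖ - log ‖linearPullback c' F z‖|) 0 r ≤
      2 * (log B + cartanCharacteristic F r) -
        (log ‖linearPullback c F 0‖ + log ‖linearPullback c' F 0‖) := by
  have hg := differentiable_linearPullback hF.differentiable c
  have hg' := differentiable_linearPullback hF.differentiable c'
  have hi := _root_.circleIntegrable_log_norm hg r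
  have hi' := _root_.circleIntegrable_log_norm hg' r
  have hiF := (circleIntegrable_const (log B) 0 r).fun_add (hF.circleIntegrable_log_norm r)
  calc circleAverage (fun z => |log ‖linearPullback c F z‖ - log ‖linearPullback c' F z‖|) 0 r
      ≤ circleAverage (fun z => (2 : ℝ) • (log B + log ‖fun l => F l z‖) -
          (log ‖linearPullback c F z‖ + log ‖linearPullback c' F z‖)) 0 r := by
        refine circleAverage_mono_of_codiscreteWithin hr.ne' (hi.sub hi').abs
          ((hiF.const_fun_smul).sub (hi.add hi')) ?_
        filter_upwards [eventually_codiscreteWithin_ne_zero hg hc0 _,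
          eventually_codiscreteWithin_ne_zero hg' hc0' _] with z hz hz' _
        exact abs_sub_le_of_le (log_norm_dotProduct_le hc hz) (log_norm_dotProduct_le hc' hz')
    _ = 2 * (log B + cartanCharacteristic F r) -
          (circleAverage (fun z => log ‖linearPullback c F z‖) 0 r +
            circleAverage (fun z => log ‖linearPullback c' F z‖) 0 r) := by
        rw [circleAverage_fun_sub hiF.const_fun_smul (hi.fun_add hi'), circleAverage_fun_add hi hi',
          circleAverage_fun_smul, smul_eq_mul, circleAverage_fun_add (circleIntegrable_const _ _ _)
          (hF.circleIntegrable_log_norm r), circleAverage_const]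
        rfl
    _ ≤ _ := by
        linarith [log_norm_le_circleAverage hg hc0 hr, log_norm_le_circleAverage hg' hc0' hr]

theorem isControlledFamily (hF : IsAdmissibleRepresentation F) (hbB : ∀ j, ∑ l, ‖b j l‖ ≤ B)
    (hb0 : ∀ j, linearPullback (b j) F 0 ≠ 0) (hD : ∀ j, -D ≤ log ‖linearPullback (b j) F 0‖)
    {r ρ M : ℝ} (hr : 0 < r) (hρ : 1 < ρ) (hρ2 : ρ ≤ 2) (hM : 1 ≤ M)
    (hM₁ : 2 * cartanCharacteristic F (ρ * r) + 2 * (log B + D) ≤ M)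
    (hM₂ : cartanCharacteristic F (ρ ^ 2 * r) + (log B + D) ≤ M) :
    IsControlledFamily (fun j z => linearPullback (b j) F (r * z)) ρ M where
  differentiable j := (differentiable_linearPullback hF.differentiable (b j)).comp (by fun_prop)
  apply_zero_ne_zero j := by simpa using hb0 j
  one_lt := hρ
  le_two := hρ2
  one_le := hM
  circleAverage_abs_le i j := by
    rw [circleAverage_comp_const_mul
      (fun z => |log ‖linearPullback (b i) F z‖ - log ‖linearPullback (b j) F z‖|)]
    linarith [hF.circleAverage_abs_log_norm_sub_le (hbB i) (hbB j) (hb0 i) (hb0 j)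
      (by positivity : 0 < ρ * r), hD i, hD j]
  circleAverage_sub_le j := by
    rw [circleAverage_comp_const_mul (fun z => log ‖linearPullback (b j) F z‖), mul_zero]
    linarith [hF.circleAverage_log_norm_linearPullback_le (hbB j) (hb0 j)
      (by positivity : ρ ^ 2 * r ≠ 0), hD j]

end IsAdmissibleRepresentation

end SecondMainTheorem

section MainInequality

open Real

variable {ι : Type*} {d n : ℕ} {b : ι → Fin d → ℂ} {F : Fin d → ℂ → ℂ} {ω τ : ι → ℝ} {θ : ℝ}

theorem log_norm_det_add_log_norm_wronskian_le (hF : ∀ l, Differentiable ℂ (F l))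
    {c : Fin d → Fin d → ℂ} (hc : (Matrix.of c).det ≠ 0) {r t : ℝ} (hr : 1 ≤ r) {z : ℂ}
    (hW : wronskian F (r * z) ≠ 0) (hcz : ∀ i, linearPullback (c i) F (r * z) ≠ 0)
    (h_le : ‖wronskian (fun i w => linearPullback (c i) F (r * w)) z‖ ≤
      exp t * ∏ i, ‖linearPullback (c i) F (r * z)‖) :
    log ‖(Matrix.of c).det‖ + log ‖wronskian F (r * z)‖ ≤
      t + ∑ i, log ‖linearPullback (c i) F (r * z)‖ := by
  have h_prod : ∏ i, ‖linearPullback (c i) F (r * z)‖ ≠ 0 :=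
    Finset.prod_ne_zero_iff.2 fun i _ => norm_ne_zero_iff.2 (hcz i)
  have h_one : 1 ≤ ‖(r : ℂ) ^ ∑ l : Fin d, (l : ℕ)‖ := by
    rw [norm_pow, Complex.norm_real, norm_of_nonneg (zero_le_one.trans hr)]
    exact one_le_pow₀ hr
  rw [wronskian_comp_const_mul fun i =>
    (differentiable_linearPullback hF (c i)).contDiff, wronskian_linearPullback hF, norm_mul,
    norm_mul] at h_le
  rw [← log_mul (norm_ne_zero_iff.2 hc) (norm_ne_zero_iff.2 hW),
    ← log_prod fun i _ => norm_ne_zero_iff.2 (hcz i), ← log_exp t,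
    ← log_mul (exp_ne_zero t) h_prod]
  refine log_le_log (mul_pos (norm_pos_iff.2 hc) (norm_pos_iff.2 hW)) (le_trans ?_ h_le)
  exact le_mul_of_one_le_left (by positivity) h_one

theorem IsNochkaWeight.exists_forall_sub_mul_log_norm_add_le [Fintype ι]
    (hω : IsNochkaWeight (spanRank ℂ b) d n ω θ) (hb : InSubgeneralPosition ℂ b n)
    (hn : n + 1 ≤ Fintype.card ι) (hτ : ∀ j, τ j ≤ ω j) (hF : ∀ l, Differentiable ℂ (F l)) :
    ∃ C : ℝ, ∀ (r t : ℝ) (z : ℂ), 1 ≤ r → wronskian F (r * z) ≠ 0 →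
      (∀ j, linearPullback (b j) F (r * z) ≠ 0) →
      (∀ e : Fin d → ι, ‖wronskian (fun i w => linearPullback (b (e i)) F (r * w)) z‖ ≤
        exp t * ∏ i, ‖linearPullback (b (e i)) F (r * z)‖) →
      (∑ j, τ j - d) * log ‖fun l => F l (r * z)‖ + log ‖wronskian F (r * z)‖ -
        ∑ j, τ j * log ‖linearPullback (b j) F (r * z)‖ ≤ t + C := by
  obtain ⟨C, hC⟩ := hω.exists_forall_sum_mul_log_sub_le hb hn hτ
    fun j => Finset.single_le_sum (f := fun j => ∑ l, ‖b j l‖)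
      (fun _ _ => Finset.sum_nonneg fun _ _ => norm_nonneg _) (Finset.mem_univ j)
  obtain ⟨D, hD⟩ := (Set.finite_range
    fun e : Fin d → ι => -log ‖(Matrix.of fun i => b (e i)).det‖).bddAbove
  refine ⟨C + D, fun r t z hr hW hz h_le => ?_⟩
  obtain ⟨e, h_det, h_sum⟩ := hC (fun l => F l (r * z)) hz
  have h_log := log_norm_det_add_log_norm_wronskian_le hF h_det hr hW (fun i => hz (e i)) (h_le e)
  have h_D : -log ‖(Matrix.of fun i => b (e i)).det‖ ≤ D := hD ⟨e, rfl⟩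
  simp only [mul_sub, Finset.sum_sub_distrib, ← Finset.sum_mul, Finset.sum_const,
    Finset.card_univ, Fintype.card_fin, nsmul_eq_mul] at h_sum
  simp only [linearPullback] at h_log ⊢
  linarith

theorem IsAdmissibleRepresentation.mul_cartanCharacteristic_add_sub_le [Fintype ι]
    (hF : IsAdmissibleRepresentation F) (hW0 : wronskian F 0 ≠ 0)
    (hb0 : ∀ j, linearPullback (b j) F 0 ≠ 0) {V : ℂ → ℝ} (hV : CircleIntegrable V 0 1)
    {γ C r : ℝ}
    (h_le : ∀ z : ℂ, ‖z‖ = 1 → wronskian F (r * z) ≠ 0 →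
      (∀ j, linearPullback (b j) F (r * z) ≠ 0) →
      γ * log ‖fun l => F l (r * z)‖ + log ‖wronskian F (r * z)‖ -
        ∑ j, τ j * log ‖linearPullback (b j) F (r * z)‖ ≤ V z + C) :
    γ * cartanCharacteristic F r + circleAverage (fun z => log ‖wronskian F z‖) 0 r -
      ∑ j, τ j * circleAverage (fun z => log ‖linearPullback (b j) F z‖) 0 r ≤
        circleAverage V 0 1 + C := by
  have h_scale (u : ℂ → ℝ) : circleAverage u 0 r = circleAverage (fun z => u (r * z)) 0 1 := by
    rw [circleAverage_comp_const_mul, one_mul]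
  have hFr : Continuous fun z : ℂ => log ‖fun l => F l (r * z)‖ :=
    hF.continuous_log_norm.comp (by fun_prop)
  have hWr : Differentiable ℂ fun z => wronskian F (r * z) :=
    (differentiable_wronskian hF.differentiable).comp (by fun_prop)
  have hgr (j : ι) : Differentiable ℂ fun z => linearPullback (b j) F (r * z) :=
    (differentiable_linearPullback hF.differentiable (b j)).comp (by fun_prop)
  have hi₁ : CircleIntegrable (fun z => γ • log ‖fun l => F l (r * z)‖) 0 1 :=
    hFr.continuousOn.circleIntegrable'.const_fun_smul
  have hi₂ := _root_.circleIntegrable_log_norm hWr 1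
  have hi₃ (j : ι) := (_root_.circleIntegrable_log_norm (hgr j) 1).const_fun_smul (a := τ j)
  have hi₄ := CircleIntegrable.fun_sum Finset.univ fun j _ => hi₃ j
  rw [cartanCharacteristic, h_scale, h_scale (fun z => log ‖wronskian F z‖),
    Finset.sum_congr rfl fun j _ => by
      rw [h_scale fun z => log ‖linearPullback (b j) F z‖, ← smul_eq_mul, ← circleAverage_fun_smul],
    ← smul_eq_mul, ← circleAverage_fun_smul, ← circleAverage_fun_add hi₁ hi₂,
    ← circleAverage_fun_sum fun j _ => hi₃ j, ← circleAverage_fun_sub (hi₁.fun_add hi₂) hi₄,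
    ← circleAverage_const C 0 1, ← circleAverage_fun_add hV (circleIntegrable_const _ _ _)]
  refine circleAverage_mono_of_codiscreteWithin one_ne_zero ((hi₁.fun_add hi₂).sub hi₄)
    (hV.add (circleIntegrable_const _ _ _)) ?_
  filter_upwards [eventually_codiscreteWithin_ne_zero hWr (x := 0) (by simpa using hW0) _,
    Filter.eventually_all.2 fun j =>
      eventually_codiscreteWithin_ne_zero (hgr j) (x := 0) (by simpa using hb0 j) _]
    with z hWz hgz hz
  exact h_le z (by simpa using hz) hWz hgz

theorem IsNochkaWeight.exists_forall_mul_cartanCharacteristic_le [Fintype ι]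
    (hω : IsNochkaWeight (spanRank ℂ b) d n ω θ) (hb : InSubgeneralPosition ℂ b n)
    (hn : n + 1 ≤ Fintype.card ι) (hd : 0 < d) (hτ : ∀ j, τ j ≤ ω j)
    (hF : IsAdmissibleRepresentation F) (hW0 : wronskian F 0 ≠ 0)
    (hb0 : ∀ j, linearPullback (b j) F 0 ≠ 0)
    (h_order : ∀ w, ∑ j, τ j * analyticOrderNatAt (linearPullback (b j) F) w ≤
      analyticOrderNatAt (wronskian F) w) :
    ∃ K C : ℝ, 0 ≤ K ∧ ∀ r ρ M : ℝ, 1 ≤ r → 1 < ρ → ρ ≤ 2 → 1 ≤ M →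
      2 * cartanCharacteristic F (ρ * r) + C ≤ M → cartanCharacteristic F (ρ ^ 2 * r) + C ≤ M →
      (∑ j, τ j - d) * cartanCharacteristic F r ≤ K * (1 + log (M / (ρ - 1))) + C := by
  obtain ⟨C₀, hC₀⟩ := hω.exists_forall_sub_mul_log_norm_add_le hb hn hτ hF.differentiable
  obtain ⟨K, hK, h_family⟩ := exists_norm_wronskian_le_exp_mul_prod ι hd
  obtain ⟨B, hB⟩ := (Set.finite_range fun j => ∑ l, ‖b j l‖).bddAbove
  obtain ⟨D, hD⟩ := (Set.finite_range fun j => -log ‖linearPullback (b j) F 0‖).bddAbove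
  have hbB (j : ι) : ∑ l, ‖b j l‖ ≤ B := hB ⟨j, rfl⟩
  have hgD (j : ι) : -D ≤ log ‖linearPullback (b j) F 0‖ := neg_le.1 (hD ⟨j, rfl⟩)
  set C₁ := C₀ - log ‖wronskian F 0‖ + ∑ j, τ j * log ‖linearPullback (b j) F 0‖
  have h_abs := le_abs_self (log B + D)
  refine ⟨K, 2 * |log B + D| + |C₁|, hK, fun r ρ M hr hρ hρ2 hM hM₁ hM₂ => ?_⟩
  have hr0 : 0 < r := by positivity
  obtain ⟨V, hV_int, hV_avg, hV⟩ := h_family _ ρ M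
    (hF.isControlledFamily hbB hb0 hgD hr0 hρ hρ2 hM
      (by linarith [abs_nonneg C₁]) (by linarith [abs_nonneg C₁, abs_nonneg (log B + D)]))
  have h_avg := hF.mul_cartanCharacteristic_add_sub_le hW0 hb0 hV_int
    fun z hz hWz hgz => hC₀ r (V z) z hr hWz hgz (hV z hz hgz)
  have h_count := sum_mul_circleAverage_sub_le_of_sum_mul_order_le
    (differentiable_wronskian hF.differentiable) hW0
    (fun j => differentiable_linearPullback hF.differentiable (b j)) hb0 h_order hr0
  simp only [mul_sub, Finset.sum_sub_distrib] at h_count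
  linarith [le_abs_self C₁, abs_nonneg (log B + D)]

/- Cartan's second main theorem in Nochka's degenerate form: as the orders of `W` account for the
weighted zeros of the `b j`, all terms but `(∑ τ - d) T` are of logarithmic size. -/
theorem IsNochkaWeight.sum_le_of_sum_mul_order_le [Fintype ι]
    (hω : IsNochkaWeight (spanRank ℂ b) d n ω θ) (hb : InSubgeneralPosition ℂ b n)
    (hn : n + 1 ≤ Fintype.card ι) (hd : 2 ≤ d) (hτ : ∀ j, τ j ≤ ω j)
    (hF : IsAdmissibleRepresentation F) (hli : LinearIndependent ℂ F)
    (hW0 : wronskian F 0 ≠ 0) (hb0 : ∀ j, linearPullback (b j) F 0 ≠ 0)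
    (h_order : ∀ w, ∑ j, τ j * analyticOrderNatAt (linearPullback (b j) F) w ≤
      analyticOrderNatAt (wronskian F) w) :
    ∑ j, τ j ≤ d := by
  have : Nontrivial (Fin d) := Fin.nontrivial_iff_two_le.2 hd
  obtain ⟨K, C, hK, h_le⟩ :=
    hω.exists_forall_mul_cartanCharacteristic_le hb hn (by lia) hτ hF hW0 hb0 h_order
  exact sub_nonpos.1 (nonpos_of_forall_mul_le_mul_log hF.bddAbove_cartanCharacteristic
    (hF.tendsto_cartanCharacteristic_atTop hli) hK h_le)

end MainInequality

/-! ### Ramified zeros and the defect relation -/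

section Ramification

variable {κ : Type*} {g : ℂ → ℂ} {F : κ → ℂ → ℂ} {m : ℕ∞} {w x : ℂ}

/-- Every zero of `g` has order at least `m`; for `m = ⊤` this means that `g`, if entire, vanishes
nowhere or identically. -/
def HasZerosOfOrderGE (m : ℕ∞) (g : ℂ → ℂ) : Prop :=
  ∀ z, g z = 0 → ∀ l : ℕ, (l : ℕ∞) < m → iteratedDeriv l g z = 0

namespace HasZerosOfOrderGE

theorem le_analyticOrderNatAt (h : HasZerosOfOrderGE m g) (hg : Differentiable ℂ g)
    (hx : g x ≠ 0) (hw : g w = 0) : m ≤ analyticOrderNatAt g w := by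
  rw [Nat.cast_analyticOrderNatAt (analyticOrderAt_ne_top hg hx w)]
  refine ENat.forall_natCast_le_iff_le.1 fun p hp => ?_
  rw [natCast_le_analyticOrderAt_iff_iteratedDeriv_eq_zero (hg.analyticAt w)]
  exact fun i hi => h w hw i (lt_of_lt_of_le (by exact_mod_cast hi) hp)

theorem one_sub_mul_order_le (h : HasZerosOfOrderGE m g) (hg : Differentiable ℂ g)
    (hx : g x ≠ 0) (hm : m ≠ 0) (k : ℕ) (w : ℂ) :
    (1 - k * (1 / m.toNat : ℝ)) * analyticOrderNatAt g w ≤ (analyticOrderNatAt g w - k : ℕ) := by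
  by_cases h_order : analyticOrderNatAt g w = 0
  · simp [h_order]
  have h_le := h.le_analyticOrderNatAt hg hx (apply_eq_zero_of_analyticOrderNatAt_ne_zero h_order)
  lift m to ℕ using ne_top_of_le_ne_top (ENat.natCast_ne_top _) h_le
  have hm0 : (0 : ℝ) < m := by exact_mod_cast Nat.pos_of_ne_zero (by exact_mod_cast hm)
  have h_one : 1 ≤ 1 / (m : ℝ) * analyticOrderNatAt g w := by
    rw [one_div, inv_mul_eq_div, one_le_div hm0]
    exact_mod_cast h_le
  have h_sub : (analyticOrderNatAt g w : ℝ) ≤ (analyticOrderNatAt g w - k : ℕ) + k := by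
    exact_mod_cast le_tsub_add
  rw [ENat.toNat_natCast]
  nlinarith [mul_le_mul_of_nonneg_left h_one k.cast_nonneg]

theorem comp_add_const (h : HasZerosOfOrderGE m g) (c : ℂ) :
    HasZerosOfOrderGE m fun z => g (z + c) := fun z hz l hl => by
  rw [iteratedDeriv_comp_add_const]
  exact h (z + c) hz l hl

end HasZerosOfOrderGE

theorem wronskian_comp_add_const {d : ℕ} (F : Fin d → ℂ → ℂ) (c z : ℂ) :
    wronskian (fun l w => F l (w + c)) z = wronskian F (z + c) := by
  simp only [wronskian, iteratedDeriv_comp_add_const]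

theorem IsAdmissibleRepresentation.comp_add_const (hF : IsAdmissibleRepresentation F) (c : ℂ) :
    IsAdmissibleRepresentation fun l z => F l (z + c) where
  differentiable l := (hF.differentiable l).comp (by fun_prop)
  exists_ne_zero z := hF.exists_ne_zero (z + c)

theorem linearIndependent_comp_add_const (hF : LinearIndependent ℂ F) (c : ℂ) :
    LinearIndependent ℂ fun l z => F l (z + c) :=
  hF.map' (LinearMap.funLeft ℂ ℂ (· + c)) (LinearMap.ker_eq_bot.2
    (LinearMap.funLeft_injective_of_surjective ℂ ℂ _ (add_right_surjective c)))

end Ramification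

section DefectRelation

variable {ι : Type*} [Fintype ι] {d n : ℕ} {b : ι → Fin d → ℂ} {F : Fin d → ℂ → ℂ} {m : ι → ℕ∞}

theorem card_sub_le_of_wronskian_ne_zero (hb : InSubgeneralPosition ℂ b n)
    (hn : n + 1 ≤ Fintype.card ι) (hd : 2 ≤ d) (hF : IsAdmissibleRepresentation F)
    (hli : LinearIndependent ℂ F) (hW0 : wronskian F 0 ≠ 0)
    (hb0 : ∀ j, linearPullback (b j) F 0 ≠ 0) (hm : ∀ j, m j ≠ 0)
    (h_mult : ∀ j, HasZerosOfOrderGE (m j) (linearPullback (b j) F)) :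
    (Fintype.card ι : ℝ) - (d - 1 : ℕ) * ∑ j, (1 / (m j).toNat : ℝ) ≤ 2 * n - d + 2 := by
  classical
  have h_rank := hb.isSubgeneralRank
  rw [Module.finrank_fin_fun] at h_rank
  obtain ⟨ω, θ, hω⟩ := h_rank.exists_isNochkaWeight (by lia) hn
  set τ : ι → ℝ := fun j => ω j * (1 - (d - 1 : ℕ) * (1 / (m j).toNat : ℝ)) with hτ
  have hτω (j : ι) : τ j ≤ ω j :=
    mul_le_of_le_one_right (hω.nonneg j) (sub_le_self _ (by positivity))
  have h_order (w : ℂ) : ∑ j, τ j * analyticOrderNatAt (linearPullback (b j) F) w ≤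
      analyticOrderNatAt (wronskian F) w := by
    refine le_trans (Finset.sum_le_sum fun j _ => ?_)
      (sum_weight_mul_order_sub_le_order_wronskian hω hb hn hF hW0 w)
    rw [hτ, mul_assoc]
    exact mul_le_mul_of_nonneg_left ((h_mult j).one_sub_mul_order_le
      (differentiable_linearPullback hF.differentiable _) (hb0 j) (hm j) _ w) (hω.nonneg j)
  have h_le := hω.sum_le_of_sum_mul_order_le hb hn hd hτω hF hli hW0 hb0 h_order
  have h_sum : ∑ j, ω j - θ * ((d - 1 : ℕ) * ∑ j, (1 / (m j).toNat : ℝ)) ≤ ∑ j, τ j := by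
    rw [Finset.mul_sum, Finset.mul_sum, ← Finset.sum_sub_distrib]
    refine Finset.sum_le_sum fun j _ => ?_
    simp only [hτ, mul_one_sub]
    gcongr
    exact hω.le_const j
  rw [hω.sum_eq] at h_sum
  have h_const := hω.const_pos
  nlinarith

/- The hyperplanes do not contain the curve, so the origin can be moved to a point where neither
the Wronskian nor any of the linear forms vanishes. -/
theorem card_sub_le (hb : InSubgeneralPosition ℂ b n) (hn : n + 1 ≤ Fintype.card ι) (hd : 2 ≤ d)
    (hF : IsAdmissibleRepresentation F) (hli : LinearIndependent ℂ F) (hb0 : ∀ j, b j ≠ 0)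
    (hm : ∀ j, m j ≠ 0) (h_mult : ∀ j, HasZerosOfOrderGE (m j) (linearPullback (b j) F)) :
    (Fintype.card ι : ℝ) - (d - 1 : ℕ) * ∑ j, (1 / (m j).toNat : ℝ) ≤ 2 * n - d + 2 := by
  obtain ⟨x, hx⟩ := exists_wronskian_ne_zero hF.differentiable hli
  have hW := eventually_codiscreteWithin_ne_zero (differentiable_wronskian hF.differentiable) hx
    Set.univ
  have hg : ∀ᶠ z in Filter.codiscreteWithin Set.univ, ∀ j, linearPullback (b j) F z ≠ 0 :=
    Filter.eventually_all.2 fun j =>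
      have ⟨_, hy⟩ := exists_linearPullback_ne_zero hli (hb0 j)
      eventually_codiscreteWithin_ne_zero (differentiable_linearPullback hF.differentiable _) hy _
  have h_nhds := mem_codiscreteWithin_iff_forall_mem_nhdsNE.1 (hW.and hg) 0 trivial
  rw [Set.compl_univ, Set.union_empty] at h_nhds
  obtain ⟨c, hWc, hgc⟩ := Filter.Eventually.exists h_nhds
  exact card_sub_le_of_wronskian_ne_zero hb hn hd (hF.comp_add_const c)
    (linearIndependent_comp_add_const hli c) (by simpa [wronskian_comp_add_const] using hWc)
    (fun j => by simpa [linearPullback] using hgc j) hm fun j => (h_mult j).comp_add_const c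

theorem sub_mul_le_add_one {k n N Q S : ℝ} (hk : 0 < k) (hkn : k ≤ n) (hnN : n ≤ N)
    (hQ : N + n + 1 ≤ Q) (h : Q - k * S ≤ 2 * n - (k + 1) + 2) : Q - N * S ≤ n + 1 := by
  have h_scaled : k * (Q - N * S) ≤ k * (n + 1) := by
    nlinarith [mul_nonneg (sub_nonneg.2 (hkn.trans hnN)) (by linarith : 0 ≤ Q - n - 1 - N),
      mul_nonneg (by linarith : 0 ≤ N) (sub_nonneg.2 hnN)]
  exact le_of_mul_le_mul_left h_scaled hk

theorem sum_one_sub_div_le_of_ne_zero {N : ℕ} (hb : InSubgeneralPosition ℂ b n) (hnN : n ≤ N)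
    (hN : N + n + 1 ≤ Fintype.card ι) (hd : 2 ≤ d) (hF : IsAdmissibleRepresentation F)
    (hli : LinearIndependent ℂ F) (hb0 : ∀ j, b j ≠ 0) (hm : ∀ j, m j ≠ 0)
    (h_mult : ∀ j, HasZerosOfOrderGE (m j) (linearPullback (b j) F)) :
    ∑ j, (1 - (N : ℝ) / (m j).toNat) ≤ n + 1 := by
  classical
  have hn : n + 1 ≤ Fintype.card ι := by lia
  have h_dim := hb.isSubgeneralRank.dim_le hn
  rw [Module.finrank_fin_fun] at h_dim
  have h_defect := card_sub_le hb hn hd hF hli hb0 hm h_mult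
  obtain ⟨k, rfl⟩ := Nat.exists_eq_add_of_le' (one_le_two.trans hd)
  have h_sum : ∑ j, (1 - (N : ℝ) / (m j).toNat) =
      Fintype.card ι - N * ∑ j, 1 / ((m j).toNat : ℝ) := by
    simp [Finset.mul_sum, div_eq_mul_inv]
  rw [h_sum]
  refine sub_mul_le_add_one (k := k) ?_ (by simpa using h_dim) ?_ ?_ (by simpa using h_defect)
  · exact_mod_cast Nat.le_of_succ_le_succ hd
  · exact_mod_cast hnN
  · exact_mod_cast hN

theorem sum_le_card_filter_add_sum_subtype {s : ι → ℝ} (hs : ∀ j, s j ≤ 1) (p : ι → Prop)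
    [DecidablePred p] :
    ∑ j, s j ≤ (Finset.univ.filter p).card + ∑ j : {j // ¬ p j}, s j := by
  rw [← Finset.sum_filter_add_sum_filter_not Finset.univ p,
    Finset.sum_subtype (p := fun j => ¬ p j) (Finset.univ.filter fun j => ¬ p j) (by simp) s]
  gcongr
  simpa using Finset.sum_le_card_nsmul (Finset.univ.filter p) s 1 fun j _ => hs j

/- The forms that vanish identically on the span of the curve are discarded; each of them lowers by
one the `N` for which the remaining ones are in `N`-subgeneral position. -/
theorem sum_one_sub_div_le {N : ℕ} (hb : InSubgeneralPosition ℂ b N)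
    (hN : 2 * N + 1 ≤ Fintype.card ι) (hd : 2 ≤ d) (hF : IsAdmissibleRepresentation F)
    (hli : LinearIndependent ℂ F) (hm : ∀ j, m j ≠ 0)
    (h_mult : ∀ j, HasZerosOfOrderGE (m j) (linearPullback (b j) F)) :
    ∑ j, (1 - (N : ℝ) / (m j).toNat) ≤ N + 1 := by
  have : Nonempty (Fin d) := ⟨0, by lia⟩
  obtain ⟨n, hn⟩ := Nat.exists_eq_add_of_le' hb.card_filter_eq_zero_le
  have h_card := Fintype.card_subtype_compl fun j => b j = 0
  rw [Fintype.card_subtype fun j => b j = 0] at h_card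
  have h_split := sum_le_card_filter_add_sum_subtype (s := fun j => 1 - (N : ℝ) / (m j).toNat)
    (fun j => sub_le_self _ (by positivity)) fun j => b j = 0
  have h_nonzero := sum_one_sub_div_le_of_ne_zero (N := N)
    (InSubgeneralPosition.subtype_ne_zero (hn ▸ hb)) (by lia) (by lia) hd hF hli
    (fun j => j.2) (fun j => hm j) fun j => h_mult j
  have hnR : (N : ℝ) = n + (Finset.univ.filter fun j => b j = 0).card := by exact_mod_cast hn
  linarith

end DefectRelation

/-! ### Reduction to nondegenerate curves -/

section Nondegenerate

variable {κ : Type*} [Fintype κ] {f : κ → ℂ → ℂ}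

theorem linearPullback_single [DecidableEq κ] (f : κ → ℂ → ℂ) (i : κ) (z : ℂ) :
    linearPullback (Pi.single i 1) f z = f i z := by
  simp [linearPullback]

/- The curve as a nondegenerate curve in its linear span, with `Φ` the restriction of linear forms
to that span. -/
theorem IsAdmissibleRepresentation.exists_linearIndependent (hf : IsAdmissibleRepresentation f) :
    ∃ (d : ℕ) (F : Fin d → ℂ → ℂ) (Φ : (κ → ℂ) →ₗ[ℂ] (Fin d → ℂ)),
      IsAdmissibleRepresentation F ∧ LinearIndependent ℂ F ∧ Function.Surjective Φ ∧
      ∀ u, linearPullback (Φ u) F = linearPullback u f := by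
  classical
  obtain ⟨d, F, Φ, hli, hΦ, h_comb, h_span⟩ :=
    exists_linearIndependent_linearCombination_eq (K := ℂ) f
  have h_pullback (u : κ → ℂ) : linearPullback (Φ u) F = linearPullback u f := by
    ext z
    simpa [linearPullback, dotProduct] using congrFun (h_comb u) z
  refine ⟨d, F, Φ, ⟨fun l => ?_, fun z => ?_⟩, hli, hΦ, h_pullback⟩
  · obtain ⟨u, hu⟩ := h_span l
    rw [hu]
    exact Differentiable.sum fun i _ => (hf.differentiable i).const_smul (u i)
  · obtain ⟨i, hi⟩ := hf.exists_ne_zero z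
    contrapose! hi
    rw [← linearPullback_single f i z, ← h_pullback]
    simp [linearPullback, dotProduct, hi]

theorem IsAdmissibleRepresentation.exists_forall_linearPullback_eq_mul [Subsingleton κ]
    (hf : IsAdmissibleRepresentation f) (z w : ℂ) :
    ∃ k : ℂ, k ≠ 0 ∧ ∀ c, linearPullback c f z = k * linearPullback c f w := by
  obtain ⟨i, hi⟩ := hf.exists_ne_zero z
  obtain ⟨j, hj⟩ := hf.exists_ne_zero w
  obtain rfl := Subsingleton.elim j i
  have : Unique κ := uniqueOfSubsingleton j
  refine ⟨f j z / f j w, div_ne_zero hi hj, fun c => ?_⟩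
  obtain rfl := Subsingleton.elim j default
  simp only [linearPullback, dotProduct, Fintype.sum_unique]
  field_simp

end Nondegenerate

/-- Nochka's theorem: Let `H_1, …, H_q` (`q ≥ 2N+1`) be hyperplanes in general
position in `ℙᴺ(ℂ)`, given by coefficient vectors `a_j`, and let `m_1, …, m_q` be positive
integers or `∞` with `Σ_j (1 − N/m_j) > N+1`. Then every holomorphic map `f : ℂ → ℙᴺ(ℂ)` (given
by an admissible representation `(f_0,…,f_N)`) intersecting each `H_j` with multiplicity at
least `m_j` is constant. (Here `(m j).toNat = 0` when `m j = ∞`, and division by `0` is `0` in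
Lean, so the term `1 − N/m_j` is `1` for `m_j = ∞`.) -/
theorem stmt13 (N q : ℕ) (hq : 2 * N + 1 ≤ q)
    (a : Fin q → Fin (N + 1) → ℂ)
    (hgen : ∀ e : Fin (N + 1) → Fin q, StrictMono e →
      Matrix.det (Matrix.of fun k i => a (e k) i) ≠ 0)
    (m : Fin q → ℕ∞) (hm : ∀ j, m j ≠ 0)
    (hsum : (N : ℝ) + 1 < ∑ j : Fin q, (1 - (N : ℝ) / ((m j).toNat : ℝ)))
    (ft : Fin (N + 1) → ℂ → ℂ)
    (hft : ∀ i, Differentiable ℂ (ft i))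
    (hnz : ∀ z : ℂ, ∃ i, ft i z ≠ 0)
    (hint : ∀ j, ∀ z : ℂ, (∑ i : Fin (N + 1), a j i * ft i z) = 0 →
      ∀ l : ℕ, (l : ℕ∞) < m j →
        iteratedDeriv l (fun w => ∑ i : Fin (N + 1), a j i * ft i w) z = 0) :
    ∀ z w : ℂ, ∃ c : ℂ, c ≠ 0 ∧ ∀ i, ft i z = c * ft i w := by
  intro z w
  have hf : IsAdmissibleRepresentation ft := ⟨hft, hnz⟩
  obtain ⟨d, F, Φ, hF, hli, hΦ, h_pullback⟩ := hf.exists_linearIndependent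
  have h_position : InSubgeneralPosition ℂ (fun j => Φ (a j)) N :=
    (InSubgeneralPosition.of_det_ne_zero hgen).map hΦ
  have h_mult (j : Fin q) : HasZerosOfOrderGE (m j) (linearPullback (Φ (a j)) F) := by
    rw [h_pullback]
    exact hint j
  have hd : d ≤ 1 := by
    by_contra! hd
    exact (sum_one_sub_div_le h_position (by simpa using hq) hd hF hli hm h_mult).not_gt hsum
  have : Subsingleton (Fin d) := Fin.subsingleton_iff_le_one.2 hd
  obtain ⟨k, hk, h_mul⟩ := hF.exists_forall_linearPullback_eq_mul z w
  refine ⟨k, hk, fun i => ?_⟩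
  rw [← linearPullback_single ft i z, ← linearPullback_single ft i w, ← h_pullback]
  exact h_mul _
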